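/- arXiv:1804.08011 — 7 statements merged into one kernel-verified Lean document; each statement's English description precedes it below -/
import Mathlib

section
/- Let F be a field, let a, b ≥ 2 be integers, and let t₁, t₂ ∈ F be distinct nonzero elements. Set e₁ = t₁ + t₂ and e₂ = t₁t₂. Then in the polynomial ring P = F[x₀,…,x_a, y₀,…,y_b] one has the ideal equality I_e = I₂(m₁) ∩ I₂(m₂), where I_e = I₂(MX) + I₂(MY) + J_e and, for ℓ = 1, 2, m_ℓ is the 2×(a+b) matrix with rows (x₀,…,x_{a−1}, y₀,…,y_{b−1}) and (x₁,…,x_a, t_ℓ y₁,…,t_ℓ y_b). -/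
open MvPolynomial

noncomputable section

/-- The polynomial ring `F[x₀,…,x_a, y₀,…,y_b]`. -/
abbrev KPoly (F : Type*) [CommRing F] (a b : ℕ) : Type _ :=
  MvPolynomial (Fin (a + 1) ⊕ Fin (b + 1)) F

variable (F : Type*) [CommRing F] (a b : ℕ)

/-- The variable `x_i`. -/
def xv (i : Fin (a + 1)) : KPoly F a b := X (Sum.inl i)

/-- The variable `y_j`. -/
def yv (j : Fin (b + 1)) : KPoly F a b := X (Sum.inr j)

/-- The ideal generated by the 2×2 minors of the matrix `MX` with rows
`(x₀,…,x_{a−1})` and `(x₁,…,x_a)`. -/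
def I2MX : Ideal (KPoly F a b) :=
  Ideal.span { f | ∃ c c' : Fin a,
    f = xv F a b c.castSucc * xv F a b c'.succ - xv F a b c'.castSucc * xv F a b c.succ }

/-- The ideal generated by the 2×2 minors of the matrix `MY` with rows
`(y₀,…,y_{b−1})` and `(y₁,…,y_b)`. -/
def I2MY : Ideal (KPoly F a b) :=
  Ideal.span { f | ∃ c c' : Fin b,
    f = yv F a b c.castSucc * yv F a b c'.succ - yv F a b c'.castSucc * yv F a b c.succ }

/-- The first row `(x₀,…,x_{a−1}, y₀,…,y_{b−1})` of the matrix `M_t`. -/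
def mrow1 : Fin a ⊕ Fin b → KPoly F a b
  | Sum.inl c => xv F a b c.castSucc
  | Sum.inr c => yv F a b c.castSucc

/-- The second row `(x₁,…,x_a, t·y₁,…,t·y_b)` of the matrix `M_t`. -/
def mrow2 (t : F) : Fin a ⊕ Fin b → KPoly F a b
  | Sum.inl c => xv F a b c.succ
  | Sum.inr c => C t * yv F a b c.succ

/-- The ideal generated by the 2×2 minors of the matrix `M_t`. -/
def I2M (t : F) : Ideal (KPoly F a b) :=
  Ideal.span { f | ∃ c c' : Fin a ⊕ Fin b,
    f = mrow1 F a b c * mrow2 F a b t c' - mrow1 F a b c' * mrow2 F a b t c }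

/-- The ideal `J_e` generated by the bilinear forms
`Q_{i,j} = x_{i+2}y_j − e₁x_{i+1}y_{j+1} + e₂x_iy_{j+2}`. -/
def Je (e1 e2 : F) : Ideal (KPoly F a b) :=
  Ideal.span { f | ∃ i j : ℕ, ∃ _ : i + 2 ≤ a, ∃ _ : j + 2 ≤ b,
    f = xv F a b ⟨i + 2, by omega⟩ * yv F a b ⟨j, by omega⟩
      - C e1 * (xv F a b ⟨i + 1, by omega⟩ * yv F a b ⟨j + 1, by omega⟩)
      + C e2 * (xv F a b ⟨i, by omega⟩ * yv F a b ⟨j + 2, by omega⟩) }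

/-- Normal form product of degree `p` and weight `w`. -/
def nfG {R : Type*} [CommRing R] (a : ℕ) (x : ℕ → R) : ℕ → ℕ → R
  | 0, _ => 1
  | p + 1, w => x (min a w) * nfG a x p (w - min a w)

theorem exch_aux {R : Type*} [CommRing R] (a : ℕ) (x : ℕ → R)
    (h : ∀ i j, i < a → j < a → x i * x (j + 1) = x j * x (i + 1)) (d : ℕ) :
    ∀ i j, i + d ≤ a → j + d ≤ a → x (i + d) * x j = x i * x (j + d) := by
  induction d with
  | zero => intro i j _ _; simp
  | succ d ih =>
    intro i j hi hj
    have h1 := h j (i + d) (by omega) (by omega)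
    have h2 := ih i (j + 1) (by omega) (by omega)
    rw [show i + (d + 1) = i + d + 1 by ring, show j + (d + 1) = j + 1 + d by ring, ← h2,
      mul_comm, h1]

theorem exch {R : Type*} [CommRing R] (a : ℕ) (x : ℕ → R)
    (h : ∀ i j, i < a → j < a → x i * x (j + 1) = x j * x (i + 1))
    (i j k l : ℕ) (hi : i ≤ a) (hj : j ≤ a) (hk : k ≤ a) (hl : l ≤ a) (e : i + j = k + l) :
    x i * x j = x k * x l := by
  rcases le_total k i with hki | hki
  · obtain ⟨d, rfl⟩ := Nat.exists_eq_add_of_le hki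
    obtain rfl : l = j + d := by omega
    exact exch_aux a x h d k j hi hl
  · obtain ⟨d, rfl⟩ := Nat.exists_eq_add_of_le hki
    obtain rfl : j = l + d := by omega
    exact (exch_aux a x h d i l hk hj).symm

theorem nfG_mul {R : Type*} [CommRing R] (a : ℕ) (x : ℕ → R)
    (h : ∀ i j, i < a → j < a → x i * x (j + 1) = x j * x (i + 1)) (p : ℕ) :
    ∀ i w, i ≤ a → w ≤ p * a → x i * nfG a x p w = nfG a x (p + 1) (i + w) := by
  induction p with
  | zero =>
    intro i w hi hw
    obtain rfl : w = 0 := by omega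
    simp [nfG, hi]
  | succ p ih =>
    intro i w hi hw
    rw [Nat.succ_mul] at hw
    rw [show nfG a x (p + 1) w = x (min a w) * nfG a x p (w - min a w) from rfl,
      show nfG a x (p + 1 + 1) (i + w) = x (min a (i + w)) *
        nfG a x (p + 1) (i + w - min a (i + w)) from rfl]
    rcases le_total a w with haw | haw
    · rw [min_eq_left haw, min_eq_left (by omega : a ≤ i + w), mul_left_comm,
        ih i (w - a) hi (by omega), show i + (w - a) = i + w - a by omega]
    · rw [min_eq_right haw, ← mul_assoc,
        exch a x h i w (min a (i + w)) (i + w - min a (i + w)) hi haw (by omega) (by omega)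
          (by omega), mul_assoc, ih _ _ (by omega) (by omega)]
      congr 2
      omega

theorem recur {F M : Type*} [Field F] [AddCommGroup M] [Module F M] (t1 t2 : F)
    (ht1 : t1 ≠ 0) (ht2 : t2 ≠ 0) (hne : t1 ≠ t2) (z0 z1 : ℕ) (g : ℕ → M)
    (h : ∀ z, z0 ≤ z → z + 2 ≤ z1 →
      g z - (t1 + t2) • g (z + 1) + (t1 * t2) • g (z + 2) = 0) :
    ∃ A B : M, ∀ z, z0 ≤ z → z ≤ z1 → g z = (t1⁻¹ ^ z) • A + (t2⁻¹ ^ z) • B := by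
  have hs : t1⁻¹ - t2⁻¹ ≠ 0 := by
    intro h0
    exact hne (inv_injective (sub_eq_zero.mp h0))
  refine ⟨(t1 ^ z0 * (t1⁻¹ - t2⁻¹)⁻¹) • (g (z0 + 1) - t2⁻¹ • g z0),
    (t2 ^ z0 * (t1⁻¹ - t2⁻¹)⁻¹) • (t1⁻¹ • g z0 - g (z0 + 1)), ?_⟩
  set A := (t1 ^ z0 * (t1⁻¹ - t2⁻¹)⁻¹) • (g (z0 + 1) - t2⁻¹ • g z0) with hA
  set B := (t2 ^ z0 * (t1⁻¹ - t2⁻¹)⁻¹) • (t1⁻¹ • g z0 - g (z0 + 1)) with hB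
  have base0 : g z0 = (t1⁻¹ ^ z0) • A + (t2⁻¹ ^ z0) • B := by
    have e1 : t1⁻¹ ^ z0 * t1 ^ z0 = 1 := by rw [← mul_pow, inv_mul_cancel₀ ht1, one_pow]
    have e2 : t2⁻¹ ^ z0 * t2 ^ z0 = 1 := by rw [← mul_pow, inv_mul_cancel₀ ht2, one_pow]
    rw [hA, hB, smul_smul, smul_smul, ← mul_assoc, ← mul_assoc, e1, e2, one_mul, ← smul_add,
      eq_inv_smul_iff₀ hs]
    module
  have base1 : g (z0 + 1) = (t1⁻¹ ^ (z0 + 1)) • A + (t2⁻¹ ^ (z0 + 1)) • B := by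
    have e1 : t1⁻¹ ^ (z0 + 1) * t1 ^ z0 = t1⁻¹ := by
      rw [pow_succ', mul_assoc, ← mul_pow, inv_mul_cancel₀ ht1, one_pow, mul_one]
    have e2 : t2⁻¹ ^ (z0 + 1) * t2 ^ z0 = t2⁻¹ := by
      rw [pow_succ', mul_assoc, ← mul_pow, inv_mul_cancel₀ ht2, one_pow, mul_one]
    rw [hA, hB, smul_smul, smul_smul, ← mul_assoc, ← mul_assoc, e1, e2, mul_comm t1⁻¹,
      mul_comm t2⁻¹, mul_smul, mul_smul, ← smul_add, eq_inv_smul_iff₀ hs]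
    module
  have key : ∀ d, (z0 + d ≤ z1 → g (z0 + d) = (t1⁻¹ ^ (z0 + d)) • A + (t2⁻¹ ^ (z0 + d)) • B) ∧
      (z0 + d + 1 ≤ z1 → g (z0 + d + 1) =
        (t1⁻¹ ^ (z0 + d + 1)) • A + (t2⁻¹ ^ (z0 + d + 1)) • B) := by
    intro d
    induction d with
    | zero => exact ⟨fun _ => base0, fun _ => base1⟩
    | succ d ih =>
      refine ⟨ih.2, fun hz => ?_⟩
      have r := h (z0 + d) (by omega) (by omega)
      rw [ih.1 (by omega), ih.2 (by omega)] at r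
      have hn : t1 * t2 ≠ 0 := mul_ne_zero ht1 ht2
      have e : z0 + (d + 1) + 1 = z0 + d + 2 := by ring
      rw [e]
      have r' := eq_neg_of_add_eq_zero_right r
      rw [← smul_right_injective M hn |>.eq_iff]
      rw [r']
      have i1 : t1⁻¹ ^ (z0 + d) = t1 ^ 2 * t1⁻¹ ^ (z0 + d + 2) := by
        rw [pow_add _ (z0 + d) 2]; field_simp
      have i1' : t1⁻¹ ^ (z0 + d + 1) = t1 * t1⁻¹ ^ (z0 + d + 2) := by
        rw [pow_succ _ (z0 + d + 1)]; field_simp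
      have i2 : t2⁻¹ ^ (z0 + d) = t2 ^ 2 * t2⁻¹ ^ (z0 + d + 2) := by
        rw [pow_add _ (z0 + d) 2]; field_simp
      have i2' : t2⁻¹ ^ (z0 + d + 1) = t2 * t2⁻¹ ^ (z0 + d + 2) := by
        rw [pow_succ _ (z0 + d + 1)]; field_simp
      rw [i1, i1', i2, i2']
      module
  intro z h0 h1
  obtain ⟨d, rfl⟩ := Nat.exists_eq_add_of_le h0
  exact (key d).1 h1

/-- The parametrization of the scroll. -/
def phiS (F : Type*) [Field F] (a b : ℕ) (t : F) : KPoly F a b →ₐ[F] MvPolynomial (Fin 3) F :=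
  aeval (Sum.elim (fun i => X 0 * X 2 ^ (i : ℕ)) (fun j => X 1 * (C (t⁻¹ ^ (j : ℕ)) * X 2 ^ (j : ℕ))))

theorem phiS_x (F : Type*) [Field F] (a b : ℕ) (t : F) (i : Fin (a + 1)) :
    phiS F a b t (xv F a b i) = X 0 * X 2 ^ (i : ℕ) := by
  simp [phiS, xv]

theorem phiS_y (F : Type*) [Field F] (a b : ℕ) (t : F) (i : Fin (b + 1)) :
    phiS F a b t (yv F a b i) = X 1 * (C (t⁻¹ ^ (i : ℕ)) * X 2 ^ (i : ℕ)) := by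
  simp [phiS, yv]

theorem phiS_kills (F : Type*) [Field F] (a b : ℕ) (t : F) (ht : t ≠ 0) (f : KPoly F a b)
    (hf : f ∈ I2M F a b t) : phiS F a b t f = 0 := by
  have : I2M F a b t ≤ RingHom.ker (phiS F a b t) := by
    refine Ideal.span_le.mpr ?_
    rintro _ ⟨c, c', rfl⟩
    have hC : (C t : MvPolynomial (Fin 3) F) * C t⁻¹ = 1 := by
      rw [← C_mul, mul_inv_cancel₀ ht, C_1]
    have hcc : ∀ r : F, phiS F a b t (C r) = C r := fun r => by
      rw [← algebraMap_eq, ← algebraMap_eq]; exact AlgHom.commutes _ r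
    rw [SetLike.mem_coe, RingHom.mem_ker]
    have key : ∀ c, phiS F a b t (mrow2 F a b t c) = X 2 * phiS F a b t (mrow1 F a b c) := by
      rintro (c | c)
      · simp only [mrow1, mrow2, phiS_x, Fin.val_succ, Fin.val_castSucc]; ring
      · simp only [mrow1, mrow2, map_mul, hcc, phiS_y, Fin.val_succ, Fin.val_castSucc, map_pow]
        rw [pow_succ (C t⁻¹ : MvPolynomial (Fin 3) F)]
        linear_combination (X 1 * C t⁻¹ ^ (c : ℕ) * X 2 ^ ((c : ℕ) + 1)) * hC
    rw [map_sub, map_mul, map_mul, key, key]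
    ring
  exact this hf

theorem Ie_le (F : Type*) [Field F] (a b : ℕ) (t s : F) (ht : t ≠ 0) :
    I2MX F a b + I2MY F a b + Je F a b (t + s) (t * s) ≤ I2M F a b t := by
  have d : ∀ (i j : ℕ) (hi : i < a) (hj : j < b),
      xv F a b ⟨i + 1, by omega⟩ * yv F a b ⟨j, by omega⟩
        - C t * (xv F a b ⟨i, by omega⟩ * yv F a b ⟨j + 1, by omega⟩) ∈ I2M F a b t := by
    intro i j hi hj
    refine Ideal.subset_span ⟨Sum.inr ⟨j, hj⟩, Sum.inl ⟨i, hi⟩, ?_⟩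
    simp only [mrow1, mrow2, Fin.castSucc_mk, Fin.succ_mk]
    ring
  refine sup_le (sup_le ?_ ?_) ?_
  · refine Ideal.span_le.mpr ?_
    rintro _ ⟨c, c', rfl⟩
    exact Ideal.subset_span ⟨Sum.inl c, Sum.inl c', rfl⟩
  · refine Ideal.span_le.mpr ?_
    rintro _ ⟨c, c', rfl⟩
    have h : mrow1 F a b (Sum.inr c) * mrow2 F a b t (Sum.inr c')
        - mrow1 F a b (Sum.inr c') * mrow2 F a b t (Sum.inr c) ∈ I2M F a b t :=
      Ideal.subset_span ⟨Sum.inr c, Sum.inr c', rfl⟩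
    have h2 := Ideal.mul_mem_left _ (C t⁻¹) h
    have hC : (C t⁻¹ : KPoly F a b) * C t = 1 := by
      rw [← C_mul, inv_mul_cancel₀ ht, C_1]
    rw [SetLike.mem_coe]
    convert h2 using 1
    simp only [mrow1, mrow2]
    linear_combination (-(yv F a b c.castSucc * yv F a b c'.succ
      - yv F a b c'.castSucc * yv F a b c.succ)) * hC
  · refine Ideal.span_le.mpr ?_
    rintro _ ⟨i, j, hi, hj, rfl⟩
    have h1 := d (i + 1) j (by omega) (by omega)
    have h2 := Ideal.mul_mem_left _ (C s) (d i (j + 1) (by omega) (by omega))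
    rw [SetLike.mem_coe]
    convert Ideal.sub_mem _ h1 h2 using 1
    simp only [C_add, C_mul]
    ring

theorem Ie_ge (F : Type*) [Field F] (a b : ℕ) (ha : 2 ≤ a) (hb : 2 ≤ b)
    (t1 t2 : F) (ht1 : t1 ≠ 0) (ht2 : t2 ≠ 0) (hne : t1 ≠ t2) (f : KPoly F a b)
    (hf1 : phiS F a b t1 f = 0) (hf2 : phiS F a b t2 f = 0) :
    f ∈ I2MX F a b + I2MY F a b + Je F a b (t1 + t2) (t1 * t2) := by
  set I := I2MX F a b + I2MY F a b + Je F a b (t1 + t2) (t1 * t2) with hI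
  let π : KPoly F a b →ₐ[F] (KPoly F a b ⧸ I) := Ideal.Quotient.mkₐ F I
  have hπ : ∀ g ∈ I, π g = 0 := fun g hg => Ideal.Quotient.eq_zero_iff_mem.mpr hg
  let x : ℕ → KPoly F a b ⧸ I := fun i => if h : i < a + 1 then π (xv F a b ⟨i, h⟩) else 0
  let y : ℕ → KPoly F a b ⧸ I := fun i => if h : i < b + 1 then π (yv F a b ⟨i, h⟩) else 0
  have hxd : ∀ i (h : i < a + 1), π (xv F a b ⟨i, h⟩) = x i := fun i h => by
    first | exact (show x i = _ from dif_pos h).symm | exact (show y i = _ from dif_pos h).symm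
  have hyd : ∀ i (h : i < b + 1), π (yv F a b ⟨i, h⟩) = y i := fun i h => by
    first | exact (show x i = _ from dif_pos h).symm | exact (show y i = _ from dif_pos h).symm
  have hx : ∀ i j, i < a → j < a → x i * x (j + 1) = x j * x (i + 1) := by
    intro i j hi hj
    have h : xv F a b (Fin.castSucc ⟨i, hi⟩) * xv F a b (Fin.succ ⟨j, hj⟩)
        - xv F a b (Fin.castSucc ⟨j, hj⟩) * xv F a b (Fin.succ ⟨i, hi⟩) ∈ I :=
      Ideal.mem_sup_left (Ideal.mem_sup_left (Ideal.subset_span ⟨⟨i, hi⟩, ⟨j, hj⟩, rfl⟩))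
    have h2 := hπ _ h
    simp only [map_sub, map_mul, Fin.castSucc_mk, Fin.succ_mk, hxd] at h2
    exact sub_eq_zero.mp h2
  have hy : ∀ i j, i < b → j < b → y i * y (j + 1) = y j * y (i + 1) := by
    intro i j hi hj
    have h : yv F a b (Fin.castSucc ⟨i, hi⟩) * yv F a b (Fin.succ ⟨j, hj⟩)
        - yv F a b (Fin.castSucc ⟨j, hj⟩) * yv F a b (Fin.succ ⟨i, hi⟩) ∈ I :=
      Ideal.mem_sup_left (Ideal.mem_sup_right (Ideal.subset_span ⟨⟨i, hi⟩, ⟨j, hj⟩, rfl⟩))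
    have h2 := hπ _ h
    simp only [map_sub, map_mul, Fin.castSucc_mk, Fin.succ_mk, hyd] at h2
    exact sub_eq_zero.mp h2
  have hCs : ∀ r : F, π (C r) = algebraMap F _ r := fun r => by
    rw [← algebraMap_eq]; exact AlgHom.commutes _ r
  have hsm : ∀ (r : F) (u : KPoly F a b ⧸ I), r • u = algebraMap F _ r * u :=
    fun r u => Algebra.smul_def r u
  have hQ : ∀ i j, i + 2 ≤ a → j + 2 ≤ b → x (i + 2) * y j
      - (t1 + t2) • (x (i + 1) * y (j + 1)) + (t1 * t2) • (x i * y (j + 2)) = 0 := by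
    intro i j hi hj
    have h := hπ _ (Ideal.mem_sup_right (Ideal.subset_span ⟨i, j, hi, hj, rfl⟩))
    simp only [map_sub, map_mul, map_add, hxd, hyd, hCs] at h
    simp only [hsm, map_mul, map_add]
    exact h
  let G := nfG a x
  let H := nfG b y
  have hG := nfG_mul a x hx
  have hH := nfG_mul b y hy
  have hGH : ∀ p q w z, w + 2 ≤ p * a → z + 2 ≤ q * b → G p (w + 2) * H q z
      - (t1 + t2) • (G p (w + 1) * H q (z + 1)) + (t1 * t2) • (G p w * H q (z + 2)) = 0 := by
    intro p q w z hw hz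
    obtain _ | p := p
    · omega
    obtain _ | q := q
    · omega
    rw [Nat.succ_mul] at hw hz
    obtain ⟨i, w, rfl, hi, hw'⟩ : ∃ i w', w = i + w' ∧ i + 2 ≤ a ∧ w' ≤ p * a :=
      ⟨min (a - 2) w, w - min (a - 2) w, by omega, by omega, by omega⟩
    obtain ⟨j, z, rfl, hj, hz'⟩ : ∃ j z', z = j + z' ∧ j + 2 ≤ b ∧ z' ≤ q * b :=
      ⟨min (b - 2) z, z - min (b - 2) z, by omega, by omega, by omega⟩
    have e1 := hG p (i + 2) w (by omega) hw'
    have e2 := hG p (i + 1) w (by omega) hw'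
    have e3 := hG p i w (by omega) hw'
    have f1 := hH q (j + 2) z (by omega) hz'
    have f2 := hH q (j + 1) z (by omega) hz'
    have f3 := hH q j z (by omega) hz'
    rw [add_right_comm] at e1 e2 f1 f2
    simp only [G, H]
    rw [← e1, ← e2, ← e3, ← f1, ← f2, ← f3]
    have := congrArg (· * (nfG a x p w * nfG b y q z)) (hQ i j hi hj)
    simp only [zero_mul, hsm] at this ⊢
    rw [← this]
    ring
  have hAB : ∀ p q n : ℕ, ∃ A B : KPoly F a b ⧸ I, ∀ w z, w + z = n → w ≤ p * a → z ≤ q * b →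
      G p w * H q z = (t1⁻¹ ^ z) • A + (t2⁻¹ ^ z) • B := by
    intro p q n
    obtain ⟨A, B, h⟩ := recur t1 t2 ht1 ht2 hne (n - p * a) (min n (q * b))
      (fun z => G p (n - z) * H q z) (by
        intro z h0 h1
        have := hGH p q (n - (z + 2)) z (by omega) (by omega)
        rw [show n - (z + 2) + 2 = n - z by omega,
          show n - (z + 2) + 1 = n - (z + 1) by omega] at this
        exact this)
    refine ⟨A, B, fun w z hn hw hz => ?_⟩
    have := h z (by omega) (by omega)
    rwa [show n - z = w by omega] at this
  choose A B hAB using hAB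
  let α : MvPolynomial (Fin 3) F →ₗ[F] (KPoly F a b ⧸ I) :=
    (basisMonomials (Fin 3) F).constr F (fun e => A (e 0) (e 1) (e 2))
  let β : MvPolynomial (Fin 3) F →ₗ[F] (KPoly F a b ⧸ I) :=
    (basisMonomials (Fin 3) F).constr F (fun e => B (e 0) (e 1) (e 2))
  have hm : ∀ p q n : ℕ, (X 0 ^ p * X 1 ^ q * X 2 ^ n : MvPolynomial (Fin 3) F) =
      basisMonomials (Fin 3) F (Finsupp.single 0 p + Finsupp.single 1 q + Finsupp.single 2 n) := by
    intro p q n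
    rw [coe_basisMonomials, X_pow_eq_monomial, X_pow_eq_monomial, X_pow_eq_monomial,
      monomial_mul, monomial_mul]
    simp
  have hα : ∀ p q n : ℕ, α (X 0 ^ p * X 1 ^ q * X 2 ^ n) = A p q n := by
    intro p q n
    rw [hm]
    simp only [α, Module.Basis.constr_basis]
    simp
  have hβ : ∀ p q n : ℕ, β (X 0 ^ p * X 1 ^ q * X 2 ^ n) = B p q n := by
    intro p q n
    rw [hm]
    simp only [β, Module.Basis.constr_basis]
    simp
  have mono : ∀ (s : Fin (a + 1) ⊕ Fin (b + 1) →₀ ℕ) (r : F),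
      ∃ c p w q z, w ≤ p * a ∧ z ≤ q * b ∧ π (monomial s r) = (c : F) • (G p w * H q z) ∧
        ∀ t, phiS F a b t (monomial s r) =
          (c * t⁻¹ ^ z) • (X 0 ^ p * X 1 ^ q * X 2 ^ (w + z)) := by
    intro s r
    refine induction_on_monomial (motive := fun g => ∃ c p w q z, w ≤ p * a ∧ z ≤ q * b ∧
      π g = (c : F) • (G p w * H q z) ∧ ∀ t, phiS F a b t g =
          (c * t⁻¹ ^ z) • (X 0 ^ p * X 1 ^ q * X 2 ^ (w + z))) ?_ ?_ s r
    · intro r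
      refine ⟨r, 0, 0, 0, 0, by simp, by simp, ?_, ?_⟩
      · rw [hCs, hsm]; simp [G, H, nfG]
      · intro t
        rw [← algebraMap_eq, AlgHom.commutes, Algebra.smul_def]; simp
    · rintro g (⟨i, hi⟩ | ⟨j, hj⟩) ⟨c, p, w, q, z, hw, hz, e1, e2⟩
      · refine ⟨c, p + 1, i + w, q, z, by rw [Nat.succ_mul]; omega, hz, ?_, ?_⟩
        · change π (g * xv F a b ⟨i, hi⟩) = _
          rw [map_mul, e1, hxd]
          simp only [G]
          rw [← hG p i w (by omega) hw, smul_mul_assoc]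
          congr 1
          ring
        · intro t
          change phiS F a b t (g * xv F a b ⟨i, hi⟩) = _
          rw [map_mul, e2, phiS_x, smul_mul_assoc]
          congr 1
          ring
      · refine ⟨c, p, w, q + 1, j + z, hw, by rw [Nat.succ_mul]; omega, ?_, ?_⟩
        · change π (g * yv F a b ⟨j, hj⟩) = _
          rw [map_mul, e1, hyd]
          simp only [H]
          rw [← hH q j z (by omega) hz, smul_mul_assoc]
          congr 1
          ring
        · intro t
          change phiS F a b t (g * yv F a b ⟨j, hj⟩) = _
          rw [map_mul, e2, phiS_y]
          simp only [smul_eq_C_mul, C_mul, C_pow]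
          ring
  have main : ∀ g, π g = α (phiS F a b t1 g) + β (phiS F a b t2 g) := by
    intro g
    induction g using MvPolynomial.induction_on' with
    | monomial s r =>
      obtain ⟨c, p, w, q, z, hw, hz, e1, e2⟩ := mono s r
      rw [e1, e2, e2, map_smul, map_smul, hα, hβ, hAB p q (w + z) w z rfl hw hz, smul_add,
        smul_smul, smul_smul]
    | add g h hg hh =>
      simp only [map_add, hg, hh]
      abel
  have := main f
  rw [hf1, hf2, map_zero, map_zero, add_zero] at this
  exact Ideal.Quotient.eq_zero_iff_mem.mp this

/-- For a field `F`, integers `a, b ≥ 2` and distinct nonzero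
`t₁, t₂ ∈ F`, with `e₁ = t₁ + t₂`, `e₂ = t₁t₂`, one has
`I_e = I₂(m₁) ∩ I₂(m₂)` in `F[x₀,…,x_a, y₀,…,y_b]`. -/
theorem stmt0 (F : Type*) [Field F] (a b : ℕ) (ha : 2 ≤ a) (hb : 2 ≤ b)
    (t1 t2 : F) (ht1 : t1 ≠ 0) (ht2 : t2 ≠ 0) (hne : t1 ≠ t2) :
    I2MX F a b + I2MY F a b + Je F a b (t1 + t2) (t1 * t2)
      = I2M F a b t1 ⊓ I2M F a b t2 := by
  refine le_antisymm (le_inf (Ie_le F a b t1 t2 ht1) ?_) ?_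
  · rw [add_comm t1 t2, mul_comm t1 t2]
    exact Ie_le F a b t2 t1 ht2
  · rintro f ⟨h1, h2⟩
    exact Ie_ge F a b ha hb t1 t2 ht1 ht2 hne f (phiS_kills F a b t1 ht1 f h1)
      (phiS_kills F a b t2 ht2 f h2)

end
end

section
/- Let F be a field and a ≥ b ≥ 2 integers. Let P' = F[x₁,…,x_a, y₁,…,y_{b−1}] and let I' ⊆ P' be the ideal generated by the monomials x_i x_j for 1 ≤ i ≤ j ≤ a−1, the monomials y_i y_j for 1 ≤ i ≤ j ≤ b−1, and the monomials x_{i+2}y_j for 0 ≤ i ≤ a−2 and 1 ≤ j ≤ b−2 together with x_{i+2}x_a for 0 ≤ i ≤ a−2. Then P'/I' is a finite-dimensional F-vector space with dim_F(P'/I') = 2a + 2b, and its graded components have dimensions 1, a+b−1, a+b−1, 1 in degrees 0, 1, 2, 3 and dimension 0 in every degree ≥ 4. -/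
open MvPolynomial

noncomputable section

/-- The polynomial ring `P' = F[x₁,…,x_a, y₁,…,y_{b−1}]`: the summand
`Fin a` indexes the variables `x₁,…,x_a` (with `inl ⟨i−1⟩` representing `x_i`)
and `Fin (b−1)` indexes `y₁,…,y_{b−1}` (with `inr ⟨j−1⟩` representing `y_j`). -/
abbrev PPoly (F : Type*) [Field F] (a b : ℕ) : Type _ :=
  MvPolynomial (Fin a ⊕ Fin (b - 1)) F

variable (F : Type*) [Field F] (a b : ℕ)

/-- The monomial ideal `I' ⊆ P'` generated by `x_i x_j` (`1 ≤ i ≤ j ≤ a−1`),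
`y_i y_j` (`1 ≤ i ≤ j ≤ b−1`), `x_{i+2} y_j` (`0 ≤ i ≤ a−2`, `1 ≤ j ≤ b−2`)
and `x_{i+2} x_a` (`0 ≤ i ≤ a−2`). -/
def Iinit : Ideal (PPoly F a b) :=
  Ideal.span
    ({ f | ∃ i j : ℕ, ∃ _ : 1 ≤ i, ∃ _ : i ≤ j, ∃ _ : j ≤ a - 1,
        f = X (Sum.inl ⟨i - 1, by omega⟩) * X (Sum.inl ⟨j - 1, by omega⟩) }
      ∪ { f | ∃ i j : ℕ, ∃ _ : 1 ≤ i, ∃ _ : i ≤ j, ∃ _ : j ≤ b - 1,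
        f = X (Sum.inr ⟨i - 1, by omega⟩) * X (Sum.inr ⟨j - 1, by omega⟩) }
      ∪ { f | ∃ i j : ℕ, ∃ _ : i + 2 ≤ a, ∃ _ : 1 ≤ j, ∃ _ : j + 2 ≤ b,
        f = X (Sum.inl ⟨i + 1, by omega⟩) * X (Sum.inr ⟨j - 1, by omega⟩) }
      ∪ { f | ∃ i : ℕ, ∃ _ : i + 2 ≤ a,
        f = X (Sum.inl ⟨i + 1, by omega⟩) * X (Sum.inl ⟨a - 1, by omega⟩) })

/-- The `n`-th graded component of `P'/I'`: the image in the quotient of the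
space of homogeneous polynomials of degree `n`. -/
def gradedComp (n : ℕ) : Submodule F (PPoly F a b ⧸ Iinit F a b) :=
  (homogeneousSubmodule (Fin a ⊕ Fin (b - 1)) F n).map
    (Ideal.Quotient.mkₐ F (Iinit F a b)).toLinearMap

/-- Pairs of variables whose product lies in the ideal. -/
def badPair (a b : ℕ) : Fin a ⊕ Fin (b - 1) → Fin a ⊕ Fin (b - 1) → Prop
  | Sum.inl i, Sum.inl j => ¬ ((i.val = 0 ∧ j.val = a - 1) ∨ (i.val = a - 1 ∧ j.val = 0))
  | Sum.inr _, Sum.inr _ => True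
  | Sum.inl i, Sum.inr j => 1 ≤ i.val ∧ j.val + 3 ≤ b
  | Sum.inr j, Sum.inl i => 1 ≤ i.val ∧ j.val + 3 ≤ b

/-- Cliques of the complementary graph. -/
def good (a b : ℕ) (T : Finset (Fin a ⊕ Fin (b - 1))) : Prop :=
  ∀ u ∈ T, ∀ v ∈ T, u ≠ v → ¬ badPair a b u v

/-- Squarefree exponent vector. -/
def ind {σ : Type*} [Fintype σ] [DecidableEq σ] (T : Finset σ) : σ →₀ ℕ :=
  Finsupp.equivFunOnFinite.symm (fun v => if v ∈ T then 1 else 0)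

theorem ind_apply {σ : Type*} [Fintype σ] [DecidableEq σ] (T : Finset σ) (v : σ) :
    ind T v = if v ∈ T then 1 else 0 := rfl

theorem ind_inj {σ : Type*} [Fintype σ] [DecidableEq σ] {T U : Finset σ}
    (h : ind T = ind U) : T = U := by
  ext v
  have := DFunLike.congr_fun h v
  simp only [ind_apply] at this
  split_ifs at this <;> simp_all

theorem ind_degree {σ : Type*} [Fintype σ] [DecidableEq σ] (T : Finset σ) :
    (ind T).degree = T.card := by
  rw [Finsupp.degree_eq_sum]
  simp [ind_apply]

theorem bad_self {a b : ℕ} (ha : 2 ≤ a) (v : Fin a ⊕ Fin (b - 1)) : badPair a b v v := by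
  rcases v with i | j
  · simp only [badPair]; omega
  · trivial

theorem std_iff {a b : ℕ} (ha : 2 ≤ a) (m : Fin a ⊕ Fin (b - 1) →₀ ℕ) :
    (∀ u v, badPair a b u v → ¬ (Finsupp.single u 1 + Finsupp.single v 1 ≤ m)) ↔
      ∃ T, good a b T ∧ ind T = m := by
  constructor
  · intro h
    have h1 : ∀ v, m v ≤ 1 := by
      intro v
      by_contra hv
      refine h v v (bad_self ha v) ?_
      intro w
      by_cases hw : v = w
      · subst hw; simp; omega
      · simp [Finsupp.single_apply, hw]
    refine ⟨m.support, ?_, ?_⟩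
    · intro u hu v hv huv hbad
      refine h u v hbad ?_
      rw [Finsupp.mem_support_iff] at hu hv
      intro w
      simp only [Finsupp.add_apply, Finsupp.single_apply]
      split_ifs with h2 h3 h3
      · exact absurd (h2.trans h3.symm) huv
      · subst h2; omega
      · subst h3; omega
      · omega
    · ext v
      rw [ind_apply]
      have := h1 v
      split_ifs with h2
      · rw [Finsupp.mem_support_iff] at h2; omega
      · rw [Finsupp.notMem_support_iff] at h2; omega
  · rintro ⟨T, hT, rfl⟩ u v hbad hle
    have hu := hle u
    have hv := hle v
    by_cases huv : u = v
    · subst huv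
      simp only [Finsupp.add_apply, Finsupp.single_eq_same, ind_apply] at hu
      split_ifs at hu <;> omega
    · simp only [Finsupp.add_apply, Finsupp.single_apply, ind_apply] at hu hv
      have hu' : u ∈ T := by by_contra hh; simp [hh] at hu
      have hv' : v ∈ T := by by_contra hh; simp [hh] at hv
      exact hT u hu' v hv' huv hbad

theorem Iinit_eq {F : Type*} [Field F] {a b : ℕ} (ha : 2 ≤ a) :
    Iinit F a b = Ideal.span ((fun s => monomial s (1 : F)) ''
      {s | ∃ u v, badPair a b u v ∧ s = Finsupp.single u 1 + Finsupp.single v 1}) := by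
  have hX : ∀ u v : Fin a ⊕ Fin (b - 1),
      (monomial (Finsupp.single u 1 + Finsupp.single v 1) (1 : F)) = X u * X v := by
    intro u v; simp [X, monomial_mul]
  apply le_antisymm
  · unfold Iinit
    rw [Ideal.span_le]
    have key : ∀ u v : Fin a ⊕ Fin (b - 1), badPair a b u v →
      (X u * X v : PPoly F a b) ∈ Ideal.span ((fun s => monomial s (1 : F)) ''
      {s | ∃ u v, badPair a b u v ∧ s = Finsupp.single u 1 + Finsupp.single v 1}) := by
      intro u v h
      exact Ideal.subset_span ⟨_, ⟨u, v, h, rfl⟩, hX u v⟩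
    rintro f (((⟨i, j, h1, h2, h3, rfl⟩ | ⟨i, j, h1, h2, h3, rfl⟩) | ⟨i, j, h1, h2, h3, rfl⟩) |
      ⟨i, h1, rfl⟩) <;> apply key <;> simp only [badPair] <;> omega
  · rw [Ideal.span_le]
    rintro _ ⟨s, ⟨u, v, h, rfl⟩, rfl⟩
    simp only [hX]
    have hll : ∀ i j : Fin a, i ≤ j → badPair a b (Sum.inl i) (Sum.inl j) →
        (X (Sum.inl i) * X (Sum.inl j) : PPoly F a b) ∈ Iinit F a b := by
      intro i j hij h
      have hij' : i.val ≤ j.val := hij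
      simp only [badPair] at h
      apply Ideal.subset_span
      by_cases hj : j.val = a - 1
      · right
        refine ⟨i.val - 1, by omega, ?_⟩
        congr <;> simp only [Fin.ext_iff] <;> omega
      · left; left; left
        exact ⟨i.val + 1, j.val + 1, by omega, by omega, by omega, rfl⟩
    have hrr : ∀ i j : Fin (b - 1), i ≤ j →
        (X (Sum.inr i) * X (Sum.inr j) : PPoly F a b) ∈ Iinit F a b := by
      intro i j hij
      have hij' : i.val ≤ j.val := hij
      apply Ideal.subset_span
      left; left; right
      exact ⟨i.val + 1, j.val + 1, by omega, by omega, by omega, rfl⟩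
    have hlr : ∀ (i : Fin a) (j : Fin (b - 1)), 1 ≤ i.val ∧ j.val + 3 ≤ b →
        (X (Sum.inl i) * X (Sum.inr j) : PPoly F a b) ∈ Iinit F a b := by
      intro i j h
      apply Ideal.subset_span
      left; right
      refine ⟨i.val - 1, j.val + 1, by omega, by omega, by omega, ?_⟩
      congr
      simp only [Fin.ext_iff]; omega
    rcases u with i | i <;> rcases v with j | j
    · rcases le_total i j with hij | hij
      · exact hll i j hij h
      · rw [mul_comm]
        refine hll j i hij ?_
        simp only [badPair] at h ⊢
        omega
    · exact hlr i j h
    · rw [mul_comm]; exact hlr j i h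
    · rcases le_total i j with hij | hij
      · exact hrr i j hij
      · rw [mul_comm]; exact hrr j i hij

theorem mem_Iinit {F : Type*} [Field F] {a b : ℕ} (ha : 2 ≤ a) (p : PPoly F a b) :
    p ∈ Iinit F a b ↔ ∀ T, good a b T → coeff (ind T) p = 0 := by
  rw [Iinit_eq ha, mem_ideal_span_monomial_image]
  constructor
  · intro h T hT
    by_contra hc
    obtain ⟨s, ⟨u, v, hb, rfl⟩, hle⟩ := h (ind T) (mem_support_iff.2 hc)
    exact (std_iff ha (ind T)).2 ⟨T, hT, rfl⟩ u v hb hle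
  · intro h m hm
    by_contra hc
    obtain ⟨T, hT, rfl⟩ := (std_iff ha m).1 (fun u v hb hle => hc ⟨_, ⟨u, v, hb, rfl⟩, hle⟩)
    exact mem_support_iff.1 hm (h T hT)

theorem finrank_range_eq {K V W W' : Type*} [Field K] [AddCommGroup V] [Module K V]
    [AddCommGroup W] [Module K W] [AddCommGroup W'] [Module K W']
    (f : V →ₗ[K] W) (g : V →ₗ[K] W') (hg : Function.Surjective g)
    (h : LinearMap.ker f = LinearMap.ker g) :
    Nonempty (LinearMap.range f ≃ₗ[K] W') :=
  ⟨f.quotKerEquivRange.symm.trans ((Submodule.quotEquivOfEq _ _ h).trans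
    (g.quotKerEquivOfSurjective hg))⟩

/-- Coefficient map. -/
def coeffMap {F : Type*} [Field F] {σ ι : Type*} (e : ι → σ →₀ ℕ) :
    MvPolynomial σ F →ₗ[F] (ι → F) :=
  LinearMap.pi (fun i => lcoeff F (e i))

theorem coeffMap_apply {F : Type*} [Field F] {σ ι : Type*} (e : ι → σ →₀ ℕ)
    (p : MvPolynomial σ F) (i : ι) : coeffMap e p i = coeff (e i) p := rfl

theorem coeffMap_sum {F : Type*} [Field F] {σ ι : Type*} [Fintype ι] (e : ι → σ →₀ ℕ)
    (he : Function.Injective e) (f : ι → F) :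
    coeffMap e (∑ i, monomial (e i) (f i)) = f := by
  classical
  ext i
  rw [coeffMap_apply, coeff_sum]
  simp [coeff_monomial, he.eq_iff]

theorem quot_equiv {F : Type*} [Field F] {a b : ℕ} (ha : 2 ≤ a) :
    Nonempty ((PPoly F a b ⧸ Iinit F a b) ≃ₗ[F] ({T // good a b T} → F)) := by
  classical
  have hinj : Function.Injective (fun T : {T // good a b T} => ind T.1) :=
    fun T U h => Subtype.ext (ind_inj h)
  obtain ⟨e⟩ := finrank_range_eq (Ideal.Quotient.mkₐ F (Iinit F a b)).toLinearMap
    (coeffMap (F := F) (fun T : {T // good a b T} => ind T.1))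
    (fun f => ⟨_, coeffMap_sum _ hinj f⟩) (by
      ext p
      rw [LinearMap.mem_ker, LinearMap.mem_ker]
      change Ideal.Quotient.mk _ p = 0 ↔ _
      rw [Ideal.Quotient.eq_zero_iff_mem, mem_Iinit ha, funext_iff]
      simp [coeffMap_apply])
  refine ⟨(LinearEquiv.ofTop _ ?_).symm.trans e⟩
  rw [LinearMap.range_eq_top]
  exact Ideal.Quotient.mk_surjective

theorem comp_equiv {F : Type*} [Field F] {a b : ℕ} (ha : 2 ≤ a) (n : ℕ) :
    Nonempty (gradedComp F a b n ≃ₗ[F] ({T // good a b T ∧ T.card = n} → F)) := by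
  classical
  have hinj : Function.Injective (fun T : {T // good a b T ∧ T.card = n} => ind T.1) :=
    fun T U h => Subtype.ext (ind_inj h)
  have hr : gradedComp F a b n = LinearMap.range
      ((Ideal.Quotient.mkₐ F (Iinit F a b)).toLinearMap ∘ₗ
        (homogeneousSubmodule (Fin a ⊕ Fin (b - 1)) F n).subtype) := by
    rw [LinearMap.range_comp, Submodule.range_subtype]; rfl
  rw [hr]
  refine finrank_range_eq _
    (coeffMap (F := F) (fun T : {T // good a b T ∧ T.card = n} => ind T.1) ∘ₗ
      (homogeneousSubmodule (Fin a ⊕ Fin (b - 1)) F n).subtype) ?_ ?_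
  · intro f
    refine ⟨⟨∑ i : {T // good a b T ∧ T.card = n}, monomial (ind i.1) (f i), ?_⟩,
      coeffMap_sum _ hinj f⟩
    refine Submodule.sum_mem _ (fun i _ => ?_)
    rw [mem_homogeneousSubmodule]
    exact isHomogeneous_monomial _ ((ind_degree i.1).trans i.2.2)
  · ext ⟨p, hp⟩
    rw [LinearMap.mem_ker, LinearMap.mem_ker]
    change Ideal.Quotient.mk _ p = 0 ↔ coeffMap _ p = 0
    rw [Ideal.Quotient.eq_zero_iff_mem, mem_Iinit ha, funext_iff]
    simp only [coeffMap_apply, Subtype.forall, Pi.zero_apply]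
    constructor
    · intro h T hT
      exact h T hT.1
    · intro h T hT
      by_cases hc : T.card = n
      · exact h T ⟨hT, hc⟩
      · rw [mem_homogeneousSubmodule] at hp
        exact hp.coeff_eq_zero (by rwa [ind_degree])

theorem finrank_comp {F : Type*} [Field F] {a b : ℕ} (ha : 2 ≤ a) (n : ℕ) :
    Module.finrank F (gradedComp F a b n) = Nat.card {T // good a b T ∧ T.card = n} := by
  classical
  obtain ⟨e⟩ := comp_equiv (F := F) (b := b) ha n
  rw [e.finrank_eq, Module.finrank_fintype_fun_eq_card, Nat.card_eq_fintype_card]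

theorem card0 {a b : ℕ} : Nat.card {T // good a b T ∧ T.card = 0} = 1 := by
  rw [Nat.card_eq_one_iff_exists]
  refine ⟨⟨∅, by simp [good]⟩, ?_⟩
  rintro ⟨T, hT, h0⟩
  simpa using h0

theorem card1 {a b : ℕ} (hb : 2 ≤ b) :
    Nat.card {T // good a b T ∧ T.card = 1} = a + b - 1 := by
  rw [← Nat.card_congr (Equiv.ofBijective
    (fun v : Fin a ⊕ Fin (b - 1) => (⟨{v}, by
      refine ⟨?_, by simp⟩
      intro u hu w hw h
      simp at hu hw
      exact absurd (hu.trans hw.symm) h⟩ : {T // good a b T ∧ T.card = 1})) ⟨?_, ?_⟩)]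
  · simp; omega
  · intro u v h; simpa using h
  · rintro ⟨T, hT, h1⟩
    obtain ⟨v, rfl⟩ := Finset.card_eq_one.1 h1
    exact ⟨v, rfl⟩

theorem bad_symm {a b : ℕ} {u v : Fin a ⊕ Fin (b - 1)} (h : badPair a b u v) :
    badPair a b v u := by
  rcases u with i | i <;> rcases v with j | j <;> simp only [badPair] at h ⊢ <;> omega

theorem good_pair {a b : ℕ} {u v : Fin a ⊕ Fin (b - 1)} (h : ¬ badPair a b u v) :
    good a b {u, v} := by
  intro x hx y hy hxy
  simp only [Finset.mem_insert, Finset.mem_singleton] at hx hy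
  rcases hx with rfl | rfl <;> rcases hy with rfl | rfl
  · exact absurd rfl hxy
  · exact h
  · exact fun hh => h (bad_symm hh)
  · exact absurd rfl hxy

/-- The edge attached to a vertex. -/
def edge {a b : ℕ} (ha : 2 ≤ a) (hb : 2 ≤ b) :
    Fin a ⊕ Fin (b - 1) → (Fin a ⊕ Fin (b - 1)) × (Fin a ⊕ Fin (b - 1))
  | Sum.inl i => if i.val = 0 then (Sum.inl ⟨0, by omega⟩, Sum.inl ⟨a - 1, by omega⟩)
      else (Sum.inl i, Sum.inr ⟨b - 2, by omega⟩)
  | Sum.inr j => (Sum.inl ⟨0, by omega⟩, Sum.inr j)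

theorem edge_good {a b : ℕ} (ha : 2 ≤ a) (hb : 2 ≤ b) (v : Fin a ⊕ Fin (b - 1)) :
    ¬ badPair a b (edge ha hb v).1 (edge ha hb v).2 := by
  rcases v with i | j
  · simp only [edge]; split_ifs <;> simp [badPair]; omega
  · simp only [edge, badPair]; omega

theorem edge_surj {a b : ℕ} (ha : 2 ≤ a) (hb : 2 ≤ b) (u v : Fin a ⊕ Fin (b - 1))
    (h : ¬ badPair a b u v) :
    ∃ w, edge ha hb w = (u, v) ∨ edge ha hb w = (v, u) := by
  have hlr : ∀ (i : Fin a) (j : Fin (b - 1)), ¬ (1 ≤ i.val ∧ j.val + 3 ≤ b) →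
      ∃ w, edge ha hb w = (Sum.inl i, Sum.inr j) := by
    intro i j h
    by_cases hi : i.val = 0
    · refine ⟨Sum.inr j, ?_⟩
      simp [edge, Fin.ext_iff, hi]
    · refine ⟨Sum.inl i, ?_⟩
      simp [edge, Fin.ext_iff, hi]; omega
  rcases u with i | i <;> rcases v with j | j
  · refine ⟨Sum.inl ⟨0, by omega⟩, ?_⟩
    simp only [badPair] at h
    simp [edge, Fin.ext_iff]; omega
  · obtain ⟨w, hw⟩ := hlr i j h
    exact ⟨w, Or.inl hw⟩
  · obtain ⟨w, hw⟩ := hlr j i h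
    exact ⟨w, Or.inr hw⟩
  · exact absurd trivial h

theorem card2 {a b : ℕ} (ha : 2 ≤ a) (hb : 2 ≤ b) :
    Nat.card {T // good a b T ∧ T.card = 2} = a + b - 1 := by
  rw [← Nat.card_congr (Equiv.ofBijective
    (fun v : Fin a ⊕ Fin (b - 1) => (⟨{(edge ha hb v).1, (edge ha hb v).2},
      good_pair (edge_good ha hb v), Finset.card_pair (fun h => edge_good ha hb v (by
        rw [h]; exact bad_self ha _))⟩ : {T // good a b T ∧ T.card = 2})) ⟨?_, ?_⟩)]
  · simp; omega
  · intro u v h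
    have h' := congrArg Subtype.val h
    simp only [Finset.ext_iff, Finset.mem_insert, Finset.mem_singleton] at h'
    have e1 := (h' (edge ha hb u).1).1 (Or.inl rfl)
    have e2 := (h' (edge ha hb u).2).1 (Or.inr rfl)
    have e3 := (h' (edge ha hb v).1).2 (Or.inl rfl)
    have e4 := (h' (edge ha hb v).2).2 (Or.inr rfl)
    clear h h'
    rcases u with i | i <;> rcases v with j | j <;> simp only [edge] at e1 e2 e3 e4 <;>
      (try split_ifs at e1 e2 e3 e4) <;> simp [Fin.ext_iff] at e1 e2 e3 e4 ⊢ <;> omega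
  · rintro ⟨T, hT, h1⟩
    obtain ⟨u, v, huv, rfl⟩ := Finset.card_eq_two.1 h1
    obtain ⟨w, hw | hw⟩ := edge_surj ha hb u v (hT u (by simp) v (by simp) huv)
    · exact ⟨w, Subtype.ext (by simp [hw])⟩
    · exact ⟨w, Subtype.ext (by simp [hw, Finset.pair_comm])⟩

/-- The unique triangle. -/
def tri {a b : ℕ} (ha : 2 ≤ a) (hb : 2 ≤ b) : Finset (Fin a ⊕ Fin (b - 1)) :=
  {Sum.inl ⟨0, by omega⟩, Sum.inl ⟨a - 1, by omega⟩, Sum.inr ⟨b - 2, by omega⟩}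

theorem tri_card {a b : ℕ} (ha : 2 ≤ a) (hb : 2 ≤ b) : (tri ha hb).card = 3 := by
  unfold tri
  rw [Finset.card_eq_three]
  refine ⟨_, _, _, ?_, ?_, ?_, rfl⟩ <;> simp
  omega

theorem tri_good {a b : ℕ} (ha : 2 ≤ a) (hb : 2 ≤ b) : good a b (tri ha hb) := by
  intro x hx y hy hxy
  simp only [tri, Finset.mem_insert, Finset.mem_singleton] at hx hy
  rcases hx with rfl | rfl | rfl <;> rcases hy with rfl | rfl | rfl <;>
    first | exact absurd rfl hxy | (simp [badPair]; done) | (simp [badPair]; omega)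

theorem tri_uniq {a b : ℕ} (ha : 2 ≤ a) (hb : 2 ≤ b) (T : Finset (Fin a ⊕ Fin (b - 1)))
    (hT : good a b T) (h3 : T.card = 3) : T = tri ha hb := by
  apply Finset.eq_of_subset_of_card_le _ (by rw [tri_card, h3])
  obtain ⟨u, v, w, huv, huw, hvw, rfl⟩ := Finset.card_eq_three.1 h3
  have h1 := hT u (by simp) v (by simp) huv
  have h2 := hT u (by simp) w (by simp) huw
  have h5 := hT v (by simp) w (by simp) hvw
  clear hT
  intro x hx
  simp only [tri, Finset.mem_insert, Finset.mem_singleton] at hx ⊢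
  rcases u with i | i <;> rcases v with j | j <;> rcases w with k | k <;>
    simp only [badPair, not_true_eq_false] at h1 h2 h5 <;>
    simp [Fin.ext_iff] at huv huw hvw <;>
    first
    | omega
    | (rcases hx with rfl | rfl | rfl <;> simp [Fin.ext_iff] <;> omega)

theorem card3 {a b : ℕ} (ha : 2 ≤ a) (hb : 2 ≤ b) :
    Nat.card {T // good a b T ∧ T.card = 3} = 1 := by
  rw [Nat.card_eq_one_iff_exists]
  refine ⟨⟨tri ha hb, tri_good ha hb, tri_card ha hb⟩, ?_⟩
  rintro ⟨T, hT, h0⟩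
  exact Subtype.ext (tri_uniq ha hb T hT h0)

theorem good_card {a b : ℕ} (ha : 2 ≤ a) (hb : 2 ≤ b) (T : Finset (Fin a ⊕ Fin (b - 1)))
    (hT : good a b T) : T.card < 4 := by
  by_contra h4
  obtain ⟨U, hU, hc⟩ := Finset.exists_subset_card_eq (show 3 ≤ T.card by omega)
  have hUe := tri_uniq ha hb U (fun u hu v hv => hT u (hU hu) v (hU hv)) hc
  obtain ⟨t, ht, htU⟩ := Finset.exists_mem_notMem_of_card_lt_card (show U.card < T.card by omega)
  subst hUe
  simp only [tri, Finset.mem_insert, Finset.mem_singleton, not_or] at htU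
  rcases t with i | j
  · have h1 := hT _ ht _ (hU (by simp [tri])) htU.1
    have h2 := htU.2.1
    simp only [badPair] at h1
    simp [Fin.ext_iff] at h2
    omega
  · exact hT _ ht _ (hU (by simp [tri])) htU.2.2 trivial

theorem cardAll {a b : ℕ} (ha : 2 ≤ a) (hb : 2 ≤ b) :
    Nat.card {T // good a b T} = 2 * a + 2 * b := by
  classical
  have hs : ∀ n, Nat.card {T // good a b T ∧ T.card = n} =
      ((Finset.univ.filter (fun T => good a b T)).filter (fun T => T.card = n)).card := by
    intro n
    rw [Nat.card_eq_fintype_card, Fintype.card_subtype, Finset.filter_filter]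
  rw [Nat.card_eq_fintype_card, Fintype.card_subtype,
    Finset.card_eq_sum_card_fiberwise (f := Finset.card) (t := Finset.range 4)]
  · simp only [← hs, Finset.sum_range_succ, Finset.sum_range_zero, card0, card1 hb, card2 ha hb,
      card3 ha hb]
    omega
  · intro T hT
    simp at hT
    simpa using good_card ha hb T hT

/-- For a field `F` and integers `a ≥ b ≥ 2`, the quotient
`P'/I'` is a finite-dimensional `F`-vector space of dimension `2a + 2b`, whose
graded components have dimensions `1, a+b−1, a+b−1, 1` in degrees `0, 1, 2, 3`
and dimension `0` in every degree `≥ 4`. -/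
theorem stmt7 (hab : b ≤ a) (hb : 2 ≤ b) :
    Module.Finite F (PPoly F a b ⧸ Iinit F a b)
    ∧ Module.finrank F (PPoly F a b ⧸ Iinit F a b) = 2 * a + 2 * b
    ∧ Module.finrank F (gradedComp F a b 0) = 1
    ∧ Module.finrank F (gradedComp F a b 1) = a + b - 1
    ∧ Module.finrank F (gradedComp F a b 2) = a + b - 1
    ∧ Module.finrank F (gradedComp F a b 3) = 1
    ∧ ∀ n : ℕ, 4 ≤ n → Module.finrank F (gradedComp F a b n) = 0 := by
  have ha : 2 ≤ a := le_trans hb hab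
  classical
  obtain ⟨e⟩ := quot_equiv (F := F) (b := b) ha
  refine ⟨Module.Finite.equiv e.symm, ?_, ?_, ?_, ?_, ?_, ?_⟩
  · rw [e.finrank_eq, Module.finrank_fintype_fun_eq_card, ← Nat.card_eq_fintype_card,
      cardAll ha hb]
  · rw [finrank_comp ha, card0]
  · rw [finrank_comp ha, card1 hb]
  · rw [finrank_comp ha, card2 ha hb]
  · rw [finrank_comp ha, card3 ha hb]
  · intro n hn
    rw [finrank_comp ha, Nat.card_eq_zero]
    left
    refine ⟨?_⟩
    rintro ⟨T, hT, hc⟩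
    have := good_card ha hb T hT
    omega

end
end

section
/- Let F be a field, let a ≥ b ≥ 2, let t₁, t₂ ∈ F be nonzero, and set e₁ = t₁ + t₂, e₂ = t₁t₂. Let P = F[x₀,…,x_a, y₀,…,y_b] and let I_e = I₂(MX) + I₂(MY) + J_e. Then the F-vector space P/(I_e + (x₀, x_a − y₀, y_b)) has dimension exactly 2(a+b). -/
open MvPolynomial

noncomputable section

variable (F : Type*) [CommRing F] (a b : ℕ)

section Spanning

/-- The relations of the quotient, in an arbitrary algebra. -/
structure KRel (K A : Type*) [Field K] [CommRing A] [Algebra K A] (a b : ℕ) (e1 e2 : K)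
    (x y : ℕ → A) : Prop where
  hab : b ≤ a
  hb : 2 ≤ b
  hx : ∀ i j, i < a → j < a → x i * x (j + 1) = x j * x (i + 1)
  hy : ∀ i j, i < b → j < b → y i * y (j + 1) = y j * y (i + 1)
  hQ : ∀ i j, i + 2 ≤ a → j + 2 ≤ b →
    x (i + 2) * y j = e1 • (x (i + 1) * y (j + 1)) - e2 • (x i * y (j + 2))
  x0 : x 0 = 0
  yb : y b = 0
  xa : x a = y 0

def kell {A : Type*} [CommRing A] (a : ℕ) (x y : ℕ → A) (k : ℕ) : A :=
  if k = 0 then 1 else if k ≤ a then x k else y (k - a)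

def kwd {A : Type*} [CommRing A] (b : ℕ) (x y : ℕ → A) (k : ℕ) : A :=
  if k = 0 then x 1 * y 0 * y (b - 1)
  else if k ≤ b then x 1 * y (k - 1) else x (k - b + 1) * y (b - 1)

def kfam {A : Type*} [CommRing A] (a b : ℕ) (x y : ℕ → A) : Fin (a + b) ⊕ Fin (a + b) → A :=
  Sum.elim (fun k => kell a x y k) (fun k => kwd b x y k)

theorem shift_eq {A : Type*} [CommRing A] (n : ℕ) (x : ℕ → A)
    (hx : ∀ i j, i < n → j < n → x i * x (j + 1) = x j * x (i + 1)) (d : ℕ) :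
    ∀ i j, i + d ≤ n → j + d ≤ n → x i * x (j + d) = x (i + d) * x j := by
  induction d with
  | zero => intro i j _ _; rfl
  | succ d ih =>
    intro i j hi hj
    have h1 := hx i (j + d) (by omega) (by omega)
    have h2 := ih (i + 1) j (by omega) (by omega)
    rw [show j + (d + 1) = j + d + 1 by ring, h1, mul_comm, h2]
    congr 2; ring

theorem sum_eq {A : Type*} [CommRing A] (n : ℕ) (x : ℕ → A)
    (hx : ∀ i j, i < n → j < n → x i * x (j + 1) = x j * x (i + 1))
    (i j k l : ℕ) (h : i + j = k + l) (hi : i ≤ n) (hj : j ≤ n) (hk : k ≤ n) (hl : l ≤ n) :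
    x i * x j = x k * x l := by
  rcases le_total i k with h1 | h1
  · obtain ⟨d, rfl⟩ := Nat.exists_eq_add_of_le h1
    obtain rfl : j = l + d := by omega
    exact shift_eq n x hx d i l hk hj
  · obtain ⟨d, rfl⟩ := Nat.exists_eq_add_of_le h1
    obtain rfl : l = j + d := by omega
    exact (shift_eq n x hx d k j hi hl).symm

namespace KRel

variable {K A : Type*} [Field K] [CommRing A] [Algebra K A] {a b : ℕ} {e1 e2 : K}
    {x y : ℕ → A}

theorem xx_zero (h : KRel K A a b e1 e2 x y)
    (i j : ℕ) (hij : i + j ≤ a) : x i * x j = 0 := by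
  rw [sum_eq a x h.hx i j 0 (i + j) (by omega) (by omega) (by omega) (by omega) (by omega),
    h.x0, zero_mul]

theorem yy_zero (h : KRel K A a b e1 e2 x y)
    (i j : ℕ) (hi : i ≤ b) (hj : j ≤ b) (hij : b ≤ i + j) : y i * y j = 0 := by
  rw [sum_eq b y h.hy i j b (i + j - b) (by omega) (by omega) (by omega) (by omega) (by omega),
    h.yb, zero_mul]

theorem xx_red (h : KRel K A a b e1 e2 x y)
    (i j : ℕ) (hi : i ≤ a) (hj : j ≤ a) (hij : a ≤ i + j) :
    x i * x j = x (i + j - a) * y 0 := by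
  rw [← h.xa]
  exact sum_eq a x h.hx _ _ _ _ (by omega) (by omega) (by omega) (by omega) (by omega)

theorem yy_red (h : KRel K A a b e1 e2 x y)
    (i j : ℕ) (hij : i + j ≤ b) : y i * y j = y 0 * y (i + j) :=
  sum_eq b y h.hy _ _ _ _ (by omega) (by omega) (by omega) (by omega) (by omega)

theorem baseA (h : KRel K A a b e1 e2 x y)
    (s : ℕ) (hs : s + 2 ≤ b) : x 1 * y 0 * y s = 0 := by
  have hb := h.hb
  have hab := h.hab
  have hq := h.hQ (a - 2) s (by omega) hs
  rw [show a - 2 + 2 = a by omega, show a - 2 + 1 = a - 1 by omega] at hq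
  have z1 := h.xx_zero 1 (a - 1) (by omega)
  have z2 := h.xx_zero 1 (a - 2) (by omega)
  rw [← h.xa, mul_assoc, hq, mul_sub, mul_smul_comm, mul_smul_comm, ← mul_assoc, z1, ← mul_assoc,
    z2]
  simp

theorem baseB (h : KRel K A a b e1 e2 x y)
    (i : ℕ) (hi : i + 2 ≤ a) : x (i + 2) * y 0 * y (b - 1) = 0 := by
  have hb := h.hb
  have hq := h.hQ i (b - 2) hi (by omega)
  rw [show b - 2 + 2 = b by omega, show b - 2 + 1 = b - 1 by omega, h.yb] at hq
  have z1 := h.yy_zero 1 (b - 1) (by omega) (by omega) (by omega)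
  have z2 : y 0 * y (b - 1) = y 1 * y (b - 2) :=
    sum_eq b y h.hy _ _ _ _ (by omega) (by omega) (by omega) (by omega) (by omega)
  rw [mul_assoc, z2, mul_left_comm, hq, mul_zero, smul_zero, sub_zero, mul_smul_comm,
    mul_left_comm, z1]
  simp

theorem xyy0 (h : KRel K A a b e1 e2 x y)
    (i : ℕ) : ∀ s, i ≤ a → s ≤ b →
    x i * y 0 * y s ∈ Submodule.span K {x 1 * y 0 * y (b - 1)} := by
  have hb := h.hb
  induction i using Nat.strong_induction_on with
  | _ i ih =>
    intro s hi hs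
    rcases Nat.eq_or_lt_of_le hs with rfl | hs
    · rw [h.yb, mul_zero]; exact zero_mem _
    match i, ih, hi with
    | 0, _, _ => rw [h.x0, zero_mul, zero_mul]; exact zero_mem _
    | 1, _, _ =>
      rcases Nat.lt_or_ge s (b - 1) with h1 | h1
      · rw [h.baseA s (by omega)]; exact zero_mem _
      · obtain rfl : s = b - 1 := by omega
        exact Submodule.subset_span rfl
    | i + 2, ih, hi =>
      rcases Nat.lt_or_ge s (b - 1) with h1 | h1
      · have m1 := ih (i + 1) (by omega) (s + 1) (by omega) (by omega)
        have m2 := ih i (by omega) (s + 2) (by omega) (by omega)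
        have : x (i + 2) * y 0 * y s =
            e1 • (x (i + 1) * y 0 * y (s + 1)) - e2 • (x i * y 0 * y (s + 2)) := by
          rw [mul_right_comm, h.hQ i s hi (by omega), sub_mul, smul_mul_assoc, smul_mul_assoc,
            mul_right_comm, mul_right_comm (x i)]
        rw [this]
        exact sub_mem (Submodule.smul_mem _ _ m1) (Submodule.smul_mem _ _ m2)
      · obtain rfl : s = b - 1 := by omega
        rw [h.baseB i hi]; exact zero_mem _

theorem xyy (h : KRel K A a b e1 e2 x y)
    (i j k : ℕ) (hi : i ≤ a) (hj : j ≤ b) (hk : k ≤ b) :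
    x i * y j * y k ∈ Submodule.span K {x 1 * y 0 * y (b - 1)} := by
  rcases Nat.lt_or_ge (j + k) b with h1 | h1
  · rw [show x i * y j * y k = x i * y 0 * y (j + k) by
      rw [mul_assoc, h.yy_red j k h1.le, mul_assoc]]
    exact h.xyy0 i _ hi h1.le
  · rw [show x i * y j * y k = 0 by rw [mul_assoc, h.yy_zero j k hj hk h1, mul_zero]]
    exact zero_mem _

theorem xxy (h : KRel K A a b e1 e2 x y)
    (i j k : ℕ) (hi : i ≤ a) (hj : j ≤ a) (hk : k ≤ b) :
    x i * x j * y k ∈ Submodule.span K {x 1 * y 0 * y (b - 1)} := by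
  rcases Nat.lt_or_ge a (i + j) with h1 | h1
  · rw [h.xx_red i j hi hj h1.le]
    exact h.xyy0 _ _ (by omega) hk
  · rw [h.xx_zero i j h1, zero_mul]; exact zero_mem _

theorem W_y (h : KRel K A a b e1 e2 x y)
    (j : ℕ) (hj : j ≤ b) : x 1 * y 0 * y (b - 1) * y j = 0 := by
  have hb := h.hb
  have hab := h.hab
  rcases Nat.eq_zero_or_pos j with rfl | h1
  · have z := h.baseB (a - 2) (by omega)
    rw [show a - 2 + 2 = a by omega, h.xa] at z
    rw [show x 1 * y 0 * y (b - 1) * y 0 = x 1 * (y 0 * y 0 * y (b - 1)) by ring, z, mul_zero]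
  · rw [mul_assoc, h.yy_zero (b - 1) j (by omega) hj (by omega), mul_zero]

theorem W_x (h : KRel K A a b e1 e2 x y)
    (i : ℕ) (hi : i ≤ a) : x 1 * y 0 * y (b - 1) * x i = 0 := by
  rcases Nat.eq_or_lt_of_le hi with rfl | h1
  · rw [h.xa]; exact h.W_y 0 (by omega)
  · rw [show x 1 * y 0 * y (b - 1) * x i = x 1 * x i * (y 0 * y (b - 1)) by ring,
      h.xx_zero 1 i (by omega), zero_mul]

theorem W_le (h : KRel K A a b e1 e2 x y)
    : Submodule.span K {x 1 * y 0 * y (b - 1)} ≤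
    Submodule.span K (Set.range (kfam a b x y)) := by
  have hb := h.hb
  apply Submodule.span_mono
  rintro _ rfl
  exact ⟨Sum.inr ⟨0, by omega⟩, by simp [kfam, kwd]⟩

theorem mem_one (h : KRel K A a b e1 e2 x y)
    : (1 : A) ∈ Submodule.span K (Set.range (kfam a b x y)) := by
  have hb := h.hb
  apply Submodule.subset_span
  exact ⟨Sum.inl ⟨0, by omega⟩, by simp [kfam, kell]⟩

theorem mem_x (h : KRel K A a b e1 e2 x y)
    (i : ℕ) (hi : i ≤ a) : x i ∈ Submodule.span K (Set.range (kfam a b x y)) := by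
  have hb := h.hb
  rcases Nat.eq_zero_or_pos i with rfl | h1
  · rw [h.x0]; exact zero_mem _
  apply Submodule.subset_span
  exact ⟨Sum.inl ⟨i, by omega⟩, by simp [kfam, kell, hi, h1.ne']⟩

theorem mem_y (h : KRel K A a b e1 e2 x y)
    (i : ℕ) (hi : i ≤ b) : y i ∈ Submodule.span K (Set.range (kfam a b x y)) := by
  have hb := h.hb
  rcases Nat.eq_zero_or_pos i with rfl | h1
  · rw [← h.xa]; exact h.mem_x _ le_rfl
  rcases Nat.eq_or_lt_of_le hi with rfl | h2
  · rw [h.yb]; exact zero_mem _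
  apply Submodule.subset_span
  exact ⟨Sum.inl ⟨a + i, by omega⟩, by simp [kfam, kell, h1.ne']⟩

theorem mem_xy (h : KRel K A a b e1 e2 x y)
    (i : ℕ) : ∀ j, i ≤ a → j ≤ b →
    x i * y j ∈ Submodule.span K (Set.range (kfam a b x y)) := by
  have hb := h.hb
  have hab := h.hab
  induction i using Nat.strong_induction_on with
  | _ i ih =>
    intro s hi hs
    rcases Nat.eq_or_lt_of_le hs with rfl | hs
    · rw [h.yb, mul_zero]; exact zero_mem _
    match i, ih, hi with
    | 0, _, _ => rw [h.x0, zero_mul]; exact zero_mem _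
    | 1, _, _ =>
      apply Submodule.subset_span
      refine ⟨Sum.inr ⟨s + 1, by omega⟩, ?_⟩
      have : s + 1 ≤ b := hs
      simp [kfam, kwd, this]
    | i + 2, ih, hi =>
      rcases Nat.lt_or_ge s (b - 1) with h1 | h1
      · have m1 := ih (i + 1) (by omega) (s + 1) (by omega) (by omega)
        have m2 := ih i (by omega) (s + 2) (by omega) (by omega)
        rw [h.hQ i s hi (by omega)]
        exact sub_mem (Submodule.smul_mem _ _ m1) (Submodule.smul_mem _ _ m2)
      · obtain rfl : s = b - 1 := by omega
        apply Submodule.subset_span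
        refine ⟨Sum.inr ⟨i + 1 + b, by omega⟩, ?_⟩
        have e1 : ¬ (i + 1 + b ≤ b) := by omega
        have e2 : i + 1 + b ≠ 0 := by omega
        simp only [kfam, kwd, Sum.elim_inr, e1, e2, if_false]
        congr 2
        omega

theorem mem_xx (h : KRel K A a b e1 e2 x y)
    (i j : ℕ) (hi : i ≤ a) (hj : j ≤ a) :
    x i * x j ∈ Submodule.span K (Set.range (kfam a b x y)) := by
  rcases Nat.lt_or_ge a (i + j) with h1 | h1
  · rw [h.xx_red i j hi hj h1.le]
    exact h.mem_xy _ _ (by omega) (by omega)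
  · rw [h.xx_zero i j h1]; exact zero_mem _

theorem mem_yy (h : KRel K A a b e1 e2 x y)
    (i j : ℕ) (hi : i ≤ b) (hj : j ≤ b) :
    y i * y j ∈ Submodule.span K (Set.range (kfam a b x y)) := by
  rcases Nat.lt_or_ge (i + j) b with h1 | h1
  · rw [h.yy_red i j h1.le, ← h.xa]
    exact h.mem_xy _ _ (by omega) (by omega)
  · rw [h.yy_zero i j hi hj h1]; exact zero_mem _

theorem mul_x_mem (h : KRel K A a b e1 e2 x y)
    (i : ℕ) (hi : i ≤ a) (p : A)
    (hp : p ∈ Submodule.span K (Set.range (kfam a b x y))) :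
    p * x i ∈ Submodule.span K (Set.range (kfam a b x y)) := by
  have hb := h.hb
  have hab := h.hab
  induction hp using Submodule.span_induction with
  | zero => rw [zero_mul]; exact zero_mem _
  | add p q _ _ hp hq => rw [add_mul]; exact add_mem hp hq
  | smul c p _ hp => rw [smul_mul_assoc]; exact Submodule.smul_mem _ _ hp
  | mem p hp =>
    obtain ⟨k | k, rfl⟩ := hp
    · simp only [kfam, Sum.elim_inl, kell]
      split_ifs with h1 h2
      · rw [one_mul]; exact h.mem_x i hi
      · exact h.mem_xx _ _ h2 hi
      · rw [mul_comm]; exact h.mem_xy _ _ hi (by omega)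
    · change kwd b x y k * _ ∈ _
      unfold kwd
      split_ifs with h1 h2
      · rw [h.W_x i hi]; exact zero_mem _
      · rw [mul_right_comm (x 1) _ (x i)]
        exact h.W_le (h.xxy _ _ _ (by omega) hi (by omega))
      · rw [mul_right_comm _ _ (x i)]
        exact h.W_le (h.xxy _ _ _ (by omega) hi (by omega))

theorem mul_y_mem (h : KRel K A a b e1 e2 x y)
    (i : ℕ) (hi : i ≤ b) (p : A)
    (hp : p ∈ Submodule.span K (Set.range (kfam a b x y))) :
    p * y i ∈ Submodule.span K (Set.range (kfam a b x y)) := by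
  have hb := h.hb
  have hab := h.hab
  induction hp using Submodule.span_induction with
  | zero => rw [zero_mul]; exact zero_mem _
  | add p q _ _ hp hq => rw [add_mul]; exact add_mem hp hq
  | smul c p _ hp => rw [smul_mul_assoc]; exact Submodule.smul_mem _ _ hp
  | mem p hp =>
    obtain ⟨k | k, rfl⟩ := hp
    · simp only [kfam, Sum.elim_inl, kell]
      split_ifs with h1 h2
      · rw [one_mul]; exact h.mem_y i hi
      · exact h.mem_xy _ _ h2 hi
      · exact h.mem_yy _ _ (by omega) hi
    · change kwd b x y k * _ ∈ _
      unfold kwd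
      split_ifs with h1 h2
      · rw [h.W_y i hi]; exact zero_mem _
      · exact h.W_le (h.xyy _ _ _ (by omega) (by omega) hi)
      · exact h.W_le (h.xyy _ _ _ (by omega) (by omega) hi)

end KRel

end Spanning

section Functional

/-- The sequence `h_k` with `h_0 = 0`, `h_1 = 1`, `h_{k+2} = e₁ h_{k+1} - e₂ h_k`. -/
def hseq {K : Type*} [Field K] (e1 e2 : K) : ℕ → K
  | 0 => 0
  | 1 => 1
  | n + 2 => e1 * hseq e1 e2 (n + 1) - e2 * hseq e1 e2 n

/-- The value of the socle functional on a monomial with given degrees and index sums. -/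
def Gval {K : Type*} [Field K] (a b : ℕ) (e1 e2 : K) (p q r s : ℕ) : K :=
  if p + q = 3 ∧ r + s + a * q = 2 * a + b then
    (if p = 3 ∨ q = 3 then hseq e1 e2 b
      else if p = 2 then hseq e1 e2 (r - a) else hseq e1 e2 r)
  else 0

theorem Gval_pos {K : Type*} [Field K] {a b : ℕ} (e1 e2 : K) {p q r s : ℕ}
    (h : p + q = 3) (h' : r + s + a * q = 2 * a + b) :
    Gval a b e1 e2 p q r s = (if p = 3 ∨ q = 3 then hseq e1 e2 b
      else if p = 2 then hseq e1 e2 (r - a) else hseq e1 e2 r) := if_pos ⟨h, h'⟩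

theorem Gval_neg {K : Type*} [Field K] {a b : ℕ} (e1 e2 : K) {p q r s : ℕ}
    (h : ¬ (p + q = 3 ∧ r + s + a * q = 2 * a + b)) :
    Gval a b e1 e2 p q r s = 0 := if_neg h

def wdx (a b : ℕ) : (Fin (a + 1) ⊕ Fin (b + 1) →₀ ℕ) →+ ℕ :=
  Finsupp.weight (Sum.elim (fun _ => 1) (fun _ => 0))
def wdy (a b : ℕ) : (Fin (a + 1) ⊕ Fin (b + 1) →₀ ℕ) →+ ℕ :=
  Finsupp.weight (Sum.elim (fun _ => 0) (fun _ => 1))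
def wsx (a b : ℕ) : (Fin (a + 1) ⊕ Fin (b + 1) →₀ ℕ) →+ ℕ :=
  Finsupp.weight (Sum.elim (fun i : Fin (a + 1) => (i : ℕ)) (fun _ => 0))
def wsy (a b : ℕ) : (Fin (a + 1) ⊕ Fin (b + 1) →₀ ℕ) →+ ℕ :=
  Finsupp.weight (Sum.elim (fun _ => 0) (fun j : Fin (b + 1) => (j : ℕ)))

theorem wsx_le (a b : ℕ) (m : Fin (a + 1) ⊕ Fin (b + 1) →₀ ℕ) :
    wsx a b m ≤ wdx a b m * a := by
  induction m using Finsupp.induction_linear with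
  | zero => simp
  | add f g hf hg => rw [map_add, map_add, add_mul]; omega
  | single i n =>
    rcases i with i | i
    · simpa [wsx, wdx, Finsupp.weight_single] using
        Nat.mul_le_mul_left n (Nat.le_of_lt_succ i.2)
    · simp [wsx, wdx, Finsupp.weight_single]

theorem wsy_le (a b : ℕ) (m : Fin (a + 1) ⊕ Fin (b + 1) →₀ ℕ) :
    wsy a b m ≤ wdy a b m * b := by
  induction m using Finsupp.induction_linear with
  | zero => simp
  | add f g hf hg => rw [map_add, map_add, add_mul]; omega
  | single i n =>
    rcases i with i | i
    · simp [wsy, wdy, Finsupp.weight_single]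
    · simpa [wsy, wdy, Finsupp.weight_single] using
        Nat.mul_le_mul_left n (Nat.le_of_lt_succ i.2)

/-- The socle functional. -/
def socle {K : Type*} [Field K] (a b : ℕ) (e1 e2 : K) : KPoly K a b →ₗ[K] K :=
  (MvPolynomial.basisMonomials _ K).constr K
    (fun m => Gval a b e1 e2 (wdx a b m) (wdy a b m) (wsx a b m) (wsy a b m))

/-- `g` is a monomial with the given degrees and index sums. -/
def Mono {K : Type*} [Field K] (a b : ℕ) (g : KPoly K a b) (p q r s : ℕ) : Prop :=
  ∃ m, g = monomial m 1 ∧ wdx a b m = p ∧ wdy a b m = q ∧ wsx a b m = r ∧ wsy a b m = s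

theorem Mono.socle {K : Type*} [Field K] {a b : ℕ} {g : KPoly K a b} {p q r s : ℕ}
    (h : Mono a b g p q r s) (e1 e2 : K) :
    socle a b e1 e2 g = Gval a b e1 e2 p q r s := by
  obtain ⟨m, rfl, rfl, rfl, rfl, rfl⟩ := h
  have := (MvPolynomial.basisMonomials (Fin (a + 1) ⊕ Fin (b + 1)) K).constr_basis K
    (fun m => Gval a b e1 e2 (wdx a b m) (wdy a b m) (wsx a b m) (wsy a b m)) m
  rw [MvPolynomial.coe_basisMonomials] at this
  exact this

theorem Mono.mul {K : Type*} [Field K] {a b : ℕ} {g g' : KPoly K a b} {p q r s p' q' r' s' : ℕ}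
    (h : Mono a b g p q r s) (h' : Mono a b g' p' q' r' s') :
    Mono a b (g * g') (p + p') (q + q') (r + r') (s + s') := by
  obtain ⟨m, rfl, rfl, rfl, rfl, rfl⟩ := h
  obtain ⟨m', rfl, rfl, rfl, rfl, rfl⟩ := h'
  exact ⟨m + m', by rw [monomial_mul, one_mul], by simp, by simp, by simp, by simp⟩

theorem mono_one {K : Type*} [Field K] {a b : ℕ} : Mono a b (1 : KPoly K a b) 0 0 0 0 :=
  ⟨0, rfl, by simp, by simp, by simp, by simp⟩

theorem mono_x {K : Type*} [Field K] {a b : ℕ} (i : Fin (a + 1)) :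
    Mono a b (xv K a b i) 1 0 i 0 :=
  ⟨Finsupp.single (Sum.inl i) 1, rfl, by simp [wdx, Finsupp.weight_single],
    by simp [wdy, Finsupp.weight_single], by simp [wsx, Finsupp.weight_single],
    by simp [wsy, Finsupp.weight_single]⟩

theorem mono_y {K : Type*} [Field K] {a b : ℕ} (i : Fin (b + 1)) :
    Mono a b (yv K a b i) 0 1 0 i :=
  ⟨Finsupp.single (Sum.inr i) 1, rfl, by simp [wdx, Finsupp.weight_single],
    by simp [wdy, Finsupp.weight_single], by simp [wsx, Finsupp.weight_single],
    by simp [wsy, Finsupp.weight_single]⟩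

/-- The largest ideal on which the functional vanishes. -/
def annIdeal {K : Type*} [Field K] (a b : ℕ) (e1 e2 : K) : Ideal (KPoly K a b) where
  carrier := { g | ∀ p, socle a b e1 e2 (p * g) = 0 }
  add_mem' := by
    intro f g hf hg p
    rw [mul_add, map_add, hf, hg, add_zero]
  zero_mem' := by intro p; simp
  smul_mem' := by
    intro c f hf p
    rw [smul_eq_mul, ← mul_assoc]; exact hf _

theorem mem_ann {K : Type*} [Field K] {a b : ℕ} {e1 e2 : K} (g : KPoly K a b)
    (h : ∀ (m : KPoly K a b) (p q r s : ℕ), Mono a b m p q r s → r ≤ p * a → s ≤ q * b →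
      socle a b e1 e2 (m * g) = 0) : g ∈ annIdeal a b e1 e2 := by
  intro p
  induction p using MvPolynomial.induction_on' with
  | monomial u c =>
    have := h (monomial u 1) _ _ _ _ ⟨u, rfl, rfl, rfl, rfl, rfl⟩ (wsx_le a b u) (wsy_le a b u)
    have e : (monomial u c : KPoly K a b) = c • monomial u 1 := by
      rw [smul_monomial, smul_eq_mul, mul_one]
    rw [e, smul_mul_assoc, map_smul, this, smul_zero]
  | add p q hp hq => rw [add_mul, map_add, hp, hq, add_zero]

theorem ideal_le {K : Type*} [Field K] (a b : ℕ) (hab : b ≤ a) (hb : 2 ≤ b) (e1 e2 : K)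
    (x0 xa : Fin (a + 1)) (y0 yb : Fin (b + 1)) (hx0 : (x0 : ℕ) = 0) (hxa : (xa : ℕ) = a)
    (hy0 : (y0 : ℕ) = 0) (hyb : (yb : ℕ) = b) :
    I2MX K a b + I2MY K a b + Je K a b e1 e2
          + Ideal.span {xv K a b x0, xv K a b xa - yv K a b y0, yv K a b yb} ≤ annIdeal a b e1 e2 := by
  refine sup_le (sup_le (sup_le ?_ ?_) ?_) ?_
  · refine Ideal.span_le.2 ?_
    rintro _ ⟨c, c', rfl⟩
    refine mem_ann _ fun m p q r s hm _ _ => ?_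
    rw [mul_sub, map_sub, (hm.mul ((mono_x _).mul (mono_x _))).socle,
      (hm.mul ((mono_x _).mul (mono_x _))).socle, sub_eq_zero]
    congr 1
    simp; omega
  · refine Ideal.span_le.2 ?_
    rintro _ ⟨c, c', rfl⟩
    refine mem_ann _ fun m p q r s hm _ _ => ?_
    rw [mul_sub, map_sub, (hm.mul ((mono_y _).mul (mono_y _))).socle,
      (hm.mul ((mono_y _).mul (mono_y _))).socle, sub_eq_zero]
    congr 1
    simp; omega
  · refine Ideal.span_le.2 ?_
    rintro _ ⟨i, j, hi, hj, rfl⟩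
    refine mem_ann _ fun m p q r s hm hr hs => ?_
    rw [mul_add, mul_sub, map_add, map_sub, ← smul_eq_C_mul, ← smul_eq_C_mul, mul_smul_comm,
      mul_smul_comm, map_smul, map_smul, (hm.mul ((mono_x _).mul (mono_y _))).socle,
      (hm.mul ((mono_x _).mul (mono_y _))).socle, (hm.mul ((mono_x _).mul (mono_y _))).socle]
    simp only [smul_eq_mul, zero_add, add_zero]
    by_cases hc : p + 1 + (q + 1) = 3 ∧ r + (i + 2) + (s + j) + a * (q + 1) = 2 * a + b
    · obtain ⟨h1, h2⟩ := hc
      rw [Gval_pos e1 e2 h1 h2, Gval_pos e1 e2 h1 (by rw [← h2]; ring),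
        Gval_pos e1 e2 h1 (by rw [← h2]; ring)]
      rcases (show (p = 1 ∧ q = 0) ∨ (p = 0 ∧ q = 1) by omega) with ⟨rfl, rfl⟩ | ⟨rfl, rfl⟩
      · obtain ⟨n, hn⟩ : ∃ n, r + i = a + n := Nat.exists_eq_add_of_le (by omega)
        simp only [show r + (i + 2) - a = n + 2 by omega, show r + (i + 1) - a = n + 1 by omega,
          show r + i - a = n by omega]
        simp [hseq]
      · obtain rfl : r = 0 := by omega
        simp [hseq]
    · rw [Gval_neg e1 e2 hc, Gval_neg e1 e2 (fun h => hc ⟨h.1, by rw [← h.2]; ring⟩),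
        Gval_neg e1 e2 (fun h => hc ⟨h.1, by rw [← h.2]; ring⟩)]
      simp
  · refine Ideal.span_le.2 ?_
    rintro g (rfl | rfl | rfl)
    · refine mem_ann _ fun m p q r s hm hr hs => ?_
      rw [(hm.mul (mono_x _)).socle, hx0]
      unfold Gval
      split_ifs with hc h1 h2
      · exfalso
        rcases h1 with h1 | h1
        · obtain rfl : p = 2 := by omega
          obtain rfl : q = 0 := by omega
          simp at hc; omega
        · omega
      · obtain rfl : p = 1 := by omega
        simp only [add_zero]
        rw [show r - a = 0 by omega]; rfl
      · obtain rfl : p = 0 := by omega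
        rw [show r = 0 by omega]; rfl
      · rfl
    · refine mem_ann _ fun m p q r s hm hr hs => ?_
      rw [mul_sub, map_sub, (hm.mul (mono_x _)).socle, (hm.mul (mono_y _)).socle, hxa, hy0, sub_eq_zero]
      simp only [add_zero]
      by_cases hc : p + 1 + q = 3 ∧ r + a + s + a * q = 2 * a + b
      · obtain ⟨h1, h2⟩ := hc
        rw [Gval_pos e1 e2 h1 h2, Gval_pos e1 e2 (by omega) (by rw [← h2]; ring)]
        rcases (show (p = 2 ∧ q = 0) ∨ (p = 1 ∧ q = 1) ∨ (p = 0 ∧ q = 2) by omega) with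
          ⟨rfl, rfl⟩ | ⟨rfl, rfl⟩ | ⟨rfl, rfl⟩
        · simp
          rw [show r - a = b by omega]
        · simp
        · simp
          rw [show r + a = b by omega]
      · rw [Gval_neg e1 e2 hc, Gval_neg e1 e2 (fun h => hc ⟨by omega, by rw [← h.2]; ring⟩)]
    · refine mem_ann _ fun m p q r s hm hr hs => ?_
      rw [(hm.mul (mono_y _)).socle, hyb]
      unfold Gval
      simp only [add_zero]
      split_ifs with hc h1 h2
      · exfalso
        rcases h1 with rfl | h1
        · omega
        · obtain rfl : q = 2 := by omega
          obtain rfl : p = 0 := by omega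
          omega
      · obtain rfl : q = 0 := by omega
        subst h2
        rw [show r - a = 0 by omega]; rfl
      · obtain rfl : p = 1 := by omega
        obtain rfl : q = 1 := by omega
        rw [show r = 0 by omega]; rfl
      · rfl

/-- Variables indexed by all naturals. -/
def xn (K : Type*) [Field K] (a b : ℕ) (i : ℕ) : KPoly K a b := xv K a b ⟨min i a, by omega⟩
def yn (K : Type*) [Field K] (a b : ℕ) (i : ℕ) : KPoly K a b := yv K a b ⟨min i b, by omega⟩

theorem xn_eq {K : Type*} [Field K] {a b : ℕ} (i : ℕ) (hi : i < a + 1) :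
    xn K a b i = xv K a b ⟨i, hi⟩ := by
  unfold xn; congr 2; omega

theorem yn_eq {K : Type*} [Field K] {a b : ℕ} (i : ℕ) (hi : i < b + 1) :
    yn K a b i = yv K a b ⟨i, hi⟩ := by
  unfold yn; congr 2; omega

theorem mono_xn {K : Type*} [Field K] {a b : ℕ} (i : ℕ) (hi : i ≤ a) :
    Mono a b (xn K a b i) 1 0 i 0 := by
  rw [xn_eq i (by omega)]; exact mono_x _

theorem mono_yn {K : Type*} [Field K] {a b : ℕ} (i : ℕ) (hi : i ≤ b) :
    Mono a b (yn K a b i) 0 1 0 i := by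
  rw [yn_eq i (by omega)]; exact mono_y _

/-- Degree and index data of `kell`. -/
theorem mono_kell {K : Type*} [Field K] {a b : ℕ} (k : ℕ) (hk : k < a + b) :
    ∃ p q r s, Mono a b (kell a (xn K a b) (yn K a b) k) p q r s ∧
      ((k = 0 ∧ p = 0 ∧ q = 0 ∧ r = 0 ∧ s = 0) ∨
       (k ≠ 0 ∧ k ≤ a ∧ p = 1 ∧ q = 0 ∧ r = k ∧ s = 0) ∨
       (k ≠ 0 ∧ a < k ∧ p = 0 ∧ q = 1 ∧ r = 0 ∧ s = k - a)) := by
  unfold kell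
  split_ifs with h1 h2
  · exact ⟨_, _, _, _, mono_one, by omega⟩
  · exact ⟨_, _, _, _, mono_xn k h2, by omega⟩
  · exact ⟨_, _, _, _, mono_yn (k - a) (by omega), by omega⟩

theorem mono_kwd {K : Type*} [Field K] {a b : ℕ} (hab : b ≤ a) (hb : 2 ≤ b)
    (k : ℕ) (hk : k < a + b) :
    ∃ p q r s, Mono a b (kwd b (xn K a b) (yn K a b) k) p q r s ∧
      ((k = 0 ∧ p = 1 ∧ q = 2 ∧ r = 1 ∧ s = b - 1) ∨
       (k ≠ 0 ∧ k ≤ b ∧ p = 1 ∧ q = 1 ∧ r = 1 ∧ s = k - 1) ∨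
       (k ≠ 0 ∧ b < k ∧ p = 1 ∧ q = 1 ∧ r = k - b + 1 ∧ s = b - 1)) := by
  unfold kwd
  split_ifs with h1 h2
  · exact ⟨_, _, _, _, ((mono_xn 1 (by omega)).mul (mono_yn 0 (by omega))).mul
      (mono_yn (b - 1) (by omega)), by omega⟩
  · exact ⟨_, _, _, _, (mono_xn 1 (by omega)).mul (mono_yn (k - 1) (by omega)), by omega⟩
  · exact ⟨_, _, _, _, (mono_xn (k - b + 1) (by omega)).mul (mono_yn (b - 1) (by omega)),
      by omega⟩

theorem socle_kell_kell {K : Type*} [Field K] {a b : ℕ} (e1 e2 : K)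
    (k l : ℕ) (hk : k < a + b) (hl : l < a + b) :
    socle a b e1 e2 (kell a (xn K a b) (yn K a b) k * kell a (xn K a b) (yn K a b) l) = 0 := by
  obtain ⟨p, q, r, s, hm, hc⟩ := mono_kell (K := K) k hk
  obtain ⟨p', q', r', s', hm', hc'⟩ := mono_kell (K := K) l hl
  rw [(hm.mul hm').socle, Gval, if_neg (by omega)]

theorem socle_kwd_kwd {K : Type*} [Field K] {a b : ℕ} (hab : b ≤ a) (hb : 2 ≤ b) (e1 e2 : K)
    (k l : ℕ) (hk : k < a + b) (hl : l < a + b) :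
    socle a b e1 e2 (kwd b (xn K a b) (yn K a b) k * kwd b (xn K a b) (yn K a b) l) = 0 := by
  obtain ⟨p, q, r, s, hm, hc⟩ := mono_kwd (K := K) hab hb k hk
  obtain ⟨p', q', r', s', hm', hc'⟩ := mono_kwd (K := K) hab hb l hl
  rw [(hm.mul hm').socle, Gval, if_neg (by omega)]

theorem socle_kell_kwd {K : Type*} [Field K] {a b : ℕ} (hab : b ≤ a) (hb : 2 ≤ b) (e1 e2 : K)
    (k l : ℕ) (hk : k < a + b) (hl : l < a + b) :
    socle a b e1 e2 (kell a (xn K a b) (yn K a b) k * kwd b (xn K a b) (yn K a b) l) =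
      if (k = 0 ∧ l = 0) ∨ k + l = a + b then 1 else 0 := by
  obtain ⟨p, q, r, s, hm, hc⟩ := mono_kell (K := K) k hk
  obtain ⟨p', q', r', s', hm', hc'⟩ := mono_kwd (K := K) hab hb l hl
  rw [(hm.mul hm').socle, Gval]
  have one : hseq e1 e2 1 = 1 := rfl
  rcases hc with ⟨h, rfl, rfl, rfl, rfl⟩ | ⟨h, h0, rfl, rfl, rfl, rfl⟩ | ⟨h, h0, rfl, rfl, rfl, rfl⟩ <;>
  rcases hc' with ⟨h', rfl, rfl, rfl, rfl⟩ | ⟨h', h0', rfl, rfl, rfl, rfl⟩ | ⟨h', h0', rfl, rfl, rfl, rfl⟩ <;>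
  simp only [zero_add, add_zero, mul_one, Nat.reduceAdd, Nat.reduceEqDiff,
    or_self, true_and, false_and, if_true, if_false] <;>
  split_ifs <;> first
    | rfl
    | (exfalso; omega)
    | (rw [← one]; congr 1; omega)

theorem exists_dual {K : Type*} [Field K] {a b : ℕ} (hab : b ≤ a) (hb : 2 ≤ b) (e1 e2 : K)
    (i : Fin (a + b) ⊕ Fin (a + b)) :
    ∃ g : KPoly K a b, ∀ j, socle a b e1 e2 (g * kfam a b (xn K a b) (yn K a b) j) =
      if j = i then 1 else 0 := by
  rcases i with k | k
  · obtain ⟨k', hk', hkk⟩ : ∃ k' < a + b, ((k : ℕ) = 0 ∧ k' = 0) ∨ ((k : ℕ) ≠ 0 ∧ k + k' = a + b) := by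
      by_cases h : (k : ℕ) = 0
      · exact ⟨0, by omega, by omega⟩
      · exact ⟨a + b - k, by omega, by omega⟩
    refine ⟨kwd b (xn K a b) (yn K a b) k', ?_⟩
    rintro (l | l)
    · simp only [kfam, Sum.elim_inl, Sum.inl.injEq]
      rw [mul_comm, socle_kell_kwd hab hb e1 e2 _ _ l.2 hk']
      congr 1
      rw [Fin.ext_iff, eq_iff_iff]
      omega
    · simp only [kfam, Sum.elim_inr]
      rw [socle_kwd_kwd hab hb e1 e2 _ _ hk' l.2]
      simp
  · obtain ⟨k', hk', hkk⟩ : ∃ k' < a + b, ((k : ℕ) = 0 ∧ k' = 0) ∨ ((k : ℕ) ≠ 0 ∧ k + k' = a + b) := by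
      by_cases h : (k : ℕ) = 0
      · exact ⟨0, by omega, by omega⟩
      · exact ⟨a + b - k, by omega, by omega⟩
    refine ⟨kell a (xn K a b) (yn K a b) k', ?_⟩
    rintro (l | l)
    · simp only [kfam, Sum.elim_inl]
      rw [socle_kell_kell e1 e2 _ _ hk' l.2]
      simp
    · simp only [kfam, Sum.elim_inr, Sum.inr.injEq]
      rw [socle_kell_kwd hab hb e1 e2 _ _ hk' l.2]
      congr 1
      rw [Fin.ext_iff, eq_iff_iff]
      omega

theorem kfam_map {A B : Type*} [CommRing A] [CommRing B] (f : A →+* B) (a b : ℕ) (x y : ℕ → A)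
    (i : Fin (a + b) ⊕ Fin (a + b)) :
    f (kfam a b x y i) = kfam a b (fun i => f (x i)) (fun i => f (y i)) i := by
  rcases i with k | k
  · simp only [kfam, Sum.elim_inl, kell]
    split_ifs <;> simp
  · simp only [kfam, Sum.elim_inr, kwd]
    split_ifs <;> simp

theorem finrank_aux {K : Type*} [Field K] (a b : ℕ) (hab : b ≤ a) (hb : 2 ≤ b) (e1 e2 : K)
    (x0 xa : Fin (a + 1)) (y0 yb : Fin (b + 1)) (hx0 : (x0 : ℕ) = 0) (hxa : (xa : ℕ) = a)
    (hy0 : (y0 : ℕ) = 0) (hyb : (yb : ℕ) = b)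
    (J : Ideal (KPoly K a b))
    (hJ : J = I2MX K a b + I2MY K a b + Je K a b e1 e2
          + Ideal.span {xv K a b x0, xv K a b xa - yv K a b y0, yv K a b yb}) :
    Module.finrank K (KPoly K a b ⧸ J) = 2 * (a + b) := by
  have hJle : J ≤ annIdeal a b e1 e2 := hJ ▸ ideal_le a b hab hb e1 e2 x0 xa y0 yb hx0 hxa hy0 hyb
  have m1 : I2MX K a b ≤ J := by
    rw [hJ]; exact le_sup_of_le_left (le_sup_of_le_left le_sup_left)
  have m2 : I2MY K a b ≤ J := by
    rw [hJ]; exact le_sup_of_le_left (le_sup_of_le_left le_sup_right)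
  have m3 : Je K a b e1 e2 ≤ J := by
    rw [hJ]; exact le_sup_of_le_left le_sup_right
  have m4 : Ideal.span {xv K a b x0, xv K a b xa - yv K a b y0, yv K a b yb} ≤ J := by
    rw [hJ]; exact le_sup_right
  clear hJ
  set π := Ideal.Quotient.mk J with hπ
  set x : ℕ → KPoly K a b ⧸ J := fun i => π (xn K a b i) with hx
  set y : ℕ → KPoly K a b ⧸ J := fun i => π (yn K a b i) with hy
  have hrel : KRel K (KPoly K a b ⧸ J) a b e1 e2 x y := by
    refine ⟨hab, hb, ?_, ?_, ?_, ?_, ?_, ?_⟩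
    · intro i j hi hj
      simp only [hx]
      rw [← map_mul, ← map_mul, Ideal.Quotient.mk_eq_mk_iff_sub_mem]
      refine m1 (Ideal.subset_span ⟨⟨i, hi⟩, ⟨j, hj⟩, ?_⟩)
      rw [xn_eq i (by omega), xn_eq j (by omega), xn_eq (i + 1) (by omega),
        xn_eq (j + 1) (by omega)]
      rfl
    · intro i j hi hj
      simp only [hy]
      rw [← map_mul, ← map_mul, Ideal.Quotient.mk_eq_mk_iff_sub_mem]
      refine m2 (Ideal.subset_span ⟨⟨i, hi⟩, ⟨j, hj⟩, ?_⟩)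
      rw [yn_eq i (by omega), yn_eq j (by omega), yn_eq (i + 1) (by omega),
        yn_eq (j + 1) (by omega)]
      rfl
    · intro i j hi hj
      have key : π (xn K a b (i + 2) * yn K a b j - C e1 * (xn K a b (i + 1) * yn K a b (j + 1))
          + C e2 * (xn K a b i * yn K a b (j + 2))) = 0 := by
        rw [Ideal.Quotient.eq_zero_iff_mem]
        refine m3 (Ideal.subset_span ⟨i, j, hi, hj, ?_⟩)
        rw [xn_eq i (by omega), xn_eq (i + 1) (by omega), xn_eq (i + 2) (by omega),
          yn_eq j (by omega), yn_eq (j + 1) (by omega), yn_eq (j + 2) (by omega)]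
      have hsm : ∀ (c : K) (p : KPoly K a b), π (C c * p) = c • π p := by
        intro c p
        rw [← smul_eq_C_mul]; rfl
      rw [map_add, map_sub, hsm, hsm] at key
      simp only [map_mul] at key
      simp only [hx, hy]
      linear_combination key
    · simp only [hx]
      rw [Ideal.Quotient.eq_zero_iff_mem, show xn K a b 0 = xv K a b x0 by rw [← hx0]; exact xn_eq _ x0.2]
      exact m4 (Ideal.subset_span (by simp))
    · simp only [hy]
      rw [Ideal.Quotient.eq_zero_iff_mem, show yn K a b b = yv K a b yb by
        rw [yn_eq b (Nat.lt_succ_self b)]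
        exact congrArg _ (Fin.ext hyb.symm)]
      exact m4 (Ideal.subset_span (by simp))
    · simp only [hx, hy]
      rw [Ideal.Quotient.mk_eq_mk_iff_sub_mem, show xn K a b a = xv K a b xa by
        rw [xn_eq a (Nat.lt_succ_self a)]
        exact congrArg _ (Fin.ext hxa.symm),
        show yn K a b 0 = yv K a b y0 by rw [← hy0]; exact yn_eq _ y0.2]
      exact m4 (Ideal.subset_span (by simp))
  have hspan : Submodule.span K (Set.range (kfam a b x y)) = ⊤ := by
    rw [eq_top_iff]
    rintro p -
    obtain ⟨p, rfl⟩ := Ideal.Quotient.mk_surjective p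
    induction p using MvPolynomial.induction_on with
    | C c =>
      have : Ideal.Quotient.mk J (C c) = c • (1 : KPoly K a b ⧸ J) := by
        rw [← mul_one (C c), ← smul_eq_C_mul]; rfl
      rw [this]
      exact Submodule.smul_mem _ _ hrel.mem_one
    | add p q hp hq => rw [map_add]; exact add_mem hp hq
    | mul_X p i hp =>
      rw [map_mul]
      rcases i with i | i
      · have := hrel.mul_x_mem i (by omega) _ hp
        simp only [hx] at this
        rw [xn_eq (i : ℕ) i.2] at this
        exact this
      · have := hrel.mul_y_mem i (by omega) _ hp
        simp only [hy] at this
        rw [yn_eq (i : ℕ) i.2] at this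
        exact this
  have hli : LinearIndependent K (kfam a b x y) := by
    rw [Fintype.linearIndependent_iff]
    intro c hc i
    obtain ⟨g, hg⟩ := exists_dual (K := K) hab hb e1 e2 i
    have h1 : π (∑ j, c j • kfam a b (xn K a b) (yn K a b) j) = 0 := by
      rw [map_sum, ← hc]
      refine Finset.sum_congr rfl fun j _ => ?_
      rw [← kfam_map]
      rfl
    rw [Ideal.Quotient.eq_zero_iff_mem] at h1
    have h2 := hJle h1 g
    rw [Finset.mul_sum, map_sum] at h2
    simp only [mul_smul_comm, map_smul, hg] at h2
    simpa using h2
  have := finrank_span_eq_card hli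
  rw [hspan, finrank_top] at this
  rw [this]
  simp
  ring

end Functional

/-- Let `F` be a field, `a ≥ b ≥ 2`, and `t₁, t₂ ∈ F` nonzero
with `e₁ = t₁ + t₂`, `e₂ = t₁t₂`. Then the `F`-vector space
`P/(I_e + (x₀, x_a − y₀, y_b))` has dimension exactly `2(a + b)`. -/
theorem stmt8 (F : Type*) [Field F] (a b : ℕ) (hab : b ≤ a) (hb : 2 ≤ b)
    (t1 t2 : F) (ht1 : t1 ≠ 0) (ht2 : t2 ≠ 0) :
    Module.finrank F
      (KPoly F a b ⧸
        (I2MX F a b + I2MY F a b + Je F a b (t1 + t2) (t1 * t2)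
          + Ideal.span {xv F a b ⟨0, by omega⟩,
              xv F a b ⟨a, by omega⟩ - yv F a b ⟨0, by omega⟩,
              yv F a b ⟨b, by omega⟩}))
      = 2 * (a + b) := by
  exact finrank_aux a b hab hb (t1 + t2) (t1 * t2) _ _ _ _ rfl rfl rfl rfl _ rfl

end
end

section
/- Let F be a field, let a ≥ b ≥ 2, let t₁, t₂ ∈ F be nonzero, and set e₁ = t₁ + t₂, e₂ = t₁t₂. Let P = F[x₀,…,x_a, y₀,…,y_b] and let I_e = I₂(MX) + I₂(MY) + J_e. Then the images of x₀, x_a − y₀, y_b form a regular sequence on the quotient ring P/I_e. -/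
open MvPolynomial

noncomputable section

variable (F : Type*) [CommRing F] (a b : ℕ)

/-! ### Core: the multigraded model -/

section Core

/-- The span of the powers `σ ^ l`, `p ≤ l ≤ q`. -/
def Wsp (K : Type*) [Field K] {E : Type*} [CommRing E] [Algebra K E] (σ : Eˣ) (p q : ℤ) :
    Submodule K E :=
  Submodule.span K {e | ∃ l : ℤ, p ≤ l ∧ l ≤ q ∧ e = ((σ ^ l : Eˣ) : E)}

variable {K : Type*} [Field K] {E : Type*} [CommRing E] [Algebra K E]

lemma Wsp_mono (σ : Eˣ) {p q p' q' : ℤ} (hp : p' ≤ p) (hq : q ≤ q') :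
    Wsp K σ p q ≤ Wsp K σ p' q' := by
  apply Submodule.span_mono
  rintro e ⟨l, h1, h2, rfl⟩
  exact ⟨l, by omega, by omega, rfl⟩

lemma Wsp_empty (σ : Eˣ) {p q : ℤ} (h : q < p) {e : E} (he : e ∈ Wsp K σ p q) : e = 0 := by
  have : {e : E | ∃ l : ℤ, p ≤ l ∧ l ≤ q ∧ e = ((σ ^ l : Eˣ) : E)} = ∅ := by
    ext e
    simp only [Set.mem_ofPred_eq, Set.mem_empty_iff_false, iff_false]
    rintro ⟨l, h1, h2, _⟩
    omega
  rw [Wsp, this, Submodule.span_empty] at he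
  simpa using he

lemma Wsp_shift (σ : Eˣ) (c : ℤ) {p q : ℤ} {e : E} (he : e ∈ Wsp K σ p q) :
    ((σ ^ c : Eˣ) : E) * e ∈ Wsp K σ (p + c) (q + c) := by
  rw [Wsp] at he
  induction he using Submodule.span_induction with
  | mem x hx =>
    obtain ⟨l, h1, h2, rfl⟩ := hx
    apply Submodule.subset_span
    refine ⟨l + c, by omega, by omega, ?_⟩
    rw [← Units.val_mul, ← zpow_add, add_comm]
  | zero => simp
  | add x y _ _ hx hy => rw [mul_add]; exact Submodule.add_mem _ hx hy
  | smul r x _ hx => rw [mul_smul_comm]; exact Submodule.smul_mem _ _ hx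

lemma Wsp_unshift (σ : Eˣ) (c : ℤ) {p q : ℤ} {e : E}
    (he : ((σ ^ c : Eˣ) : E) * e ∈ Wsp K σ (p + c) (q + c)) : e ∈ Wsp K σ p q := by
  have := Wsp_shift σ (-c) he
  rw [← mul_assoc, ← Units.val_mul, ← zpow_add] at this
  simpa using this

/-- The graded pieces of the ring. -/
def Bsp (K : Type*) [Field K] {E : Type*} [CommRing E] [Algebra K E] (σ : Eˣ) (a b : ℕ)
    (m n d : ℤ) : Submodule K E :=
  Wsp K σ (max 0 (d - m * a)) (min (n * b) d)

lemma Bsp_negx (σ : Eˣ) {a b : ℕ} (ha : 0 < a) {m n d : ℤ} (hm : m < 0) {e : E}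
    (he : e ∈ Bsp K σ a b m n d) : e = 0 := by
  refine Wsp_empty σ ?_ he
  have : m * a < 0 := mul_neg_of_neg_of_pos hm (by exact_mod_cast ha)
  omega

lemma Bsp_negy (σ : Eˣ) {a b : ℕ} (hb : 0 < b) {m n d : ℤ} (hn : n < 0) {e : E}
    (he : e ∈ Bsp K σ a b m n d) : e = 0 := by
  refine Wsp_empty σ ?_ he
  have : n * b < 0 := mul_neg_of_neg_of_pos hn (by exact_mod_cast hb)
  omega

/-- The key induction. -/
lemma key_ind (σ : Eˣ) {a b : ℕ} (κ : ℤ → ℤ) (f : ℤ → ℤ → ℤ → E)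
    (hx : ∀ m n d, m < 0 → f m n d = 0) (hy : ∀ m n d, n < 0 → f m n d = 0)
    (h : ∀ m n d, f (m - 1) n (d - a) - f m (n - 1) d ∈
      Wsp K σ (κ (d - m * a)) (min (n * b) d)) (m n d : ℤ) :
    f m n d ∈ Wsp K σ (κ (d - m * a)) (min (n * b) d) := by
  rcases le_total d (n * b) with hd | hd
  · -- induction on `m`
    obtain ⟨N, hN⟩ : ∃ N : ℕ, m < N := ⟨(m + 1).toNat, by omega⟩
    induction N generalizing m n d with
    | zero => rw [hx m n d (by simpa using hN)]; exact Submodule.zero_mem _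
    | succ N ih =>
      have e1 : (n + 1) * (b : ℤ) = n * b + b := by ring
      have e2 : d - a - (m - 1) * a = d - m * a := by ring
      have h1 := h m (n + 1) d
      rw [add_sub_cancel_right] at h1
      have h2 := ih (m - 1) (n + 1) (d - a) (by omega) (by push_cast at hN; omega)
      rw [e2] at h2
      have h3 := Submodule.sub_mem _ (Wsp_mono (K := K) σ (le_refl _)
        (show min ((n + 1) * (b : ℤ)) (d - a) ≤ min (n * b) d by omega) h2)
        (Wsp_mono (K := K) σ (le_refl _)
        (show min ((n + 1) * (b : ℤ)) d ≤ min (n * b) d by omega) h1)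
      simpa using h3
  · obtain ⟨N, hN⟩ : ∃ N : ℕ, n < N := ⟨(n + 1).toNat, by omega⟩
    induction N generalizing m n d with
    | zero => rw [hy m n d (by simpa using hN)]; exact Submodule.zero_mem _
    | succ N ih =>
      have e1 : (n - 1) * (b : ℤ) = n * b - b := by ring
      have e2 : d + a - (m + 1) * a = d - m * a := by ring
      have h1 := h (m + 1) n (d + a)
      rw [add_sub_cancel_right, add_sub_cancel_right, e2] at h1
      have h2 := ih (m + 1) (n - 1) (d + a) (by omega) (by push_cast at hN; omega)
      rw [e2] at h2
      have h3 := Submodule.add_mem _ (Wsp_mono (K := K) σ (le_refl _)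
        (show min ((n - 1) * (b : ℤ)) (d + a) ≤ min (n * b) d by omega) h2)
        (Wsp_mono (K := K) σ (le_refl _)
        (show min (n * (b : ℤ)) (d + a) ≤ min (n * b) d by omega) h1)
      simpa using h3

/-- The ambient Laurent ring. -/
abbrev LR (E : Type*) [CommRing E] := AddMonoidAlgebra E (ℤ × ℤ × ℤ)

/-- Membership in the graded subring. -/
def InB (K : Type*) [Field K] {E : Type*} [CommRing E] [Algebra K E] (σ : Eˣ) (a b : ℕ)
    (f : LR E) : Prop :=
  ∀ m n d : ℤ, f.coeff (m, n, d) ∈ Bsp K σ a b m n d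

abbrev mon (m n d : ℤ) (e : E) : LR E := AddMonoidAlgebra.single (m, n, d) e

lemma mon_coeff (m n d m' n' d' : ℤ) (e : E) (f : LR E) :
    (mon m n d e * f).coeff (m', n', d') = e * f.coeff (m' - m, n' - n, d' - d) := by
  rw [AddMonoidAlgebra.coeff_single_mul_apply]
  congr 2
  simp only [Prod.neg_mk, Prod.mk_add_mk, Prod.mk.injEq]
  refine ⟨by ring, by ring, by ring⟩

lemma mon_mul (m n d m' n' d' : ℤ) (e e' : E) :
    (mon m n d e * mon m' n' d' e') = mon (m + m') (n + n') (d + d') (e * e') := by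
  simp [mon, AddMonoidAlgebra.single_mul_single]

lemma mon_congr {m n d m' n' d' : ℤ} {e e' : E} (hm : m = m') (hn : n = n') (hd : d = d')
    (he : e = e') : mon m n d e = mon m' n' d' e' := by
  rw [hm, hn, hd, he]

lemma LR_ext {f g : LR E} (h : ∀ m n d, f.coeff (m, n, d) = g.coeff (m, n, d)) : f = g := by
  apply AddMonoidAlgebra.ext
  ext ⟨m, n, d⟩
  exact h m n d

lemma LR_mem {T : AddSubgroup (LR E)} (f : LR E)
    (h : ∀ m n d, mon m n d (f.coeff (m, n, d)) ∈ T) : f ∈ T := by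
  have : f = f.coeff.sum fun p e => AddMonoidAlgebra.single p e := by
    apply AddMonoidAlgebra.ext
    simp
  rw [this]
  refine AddSubgroup.sum_mem _ fun p _ => ?_
  exact h p.1 p.2.1 p.2.2

lemma InB_mon (σ : Eˣ) {a b : ℕ} {m n d : ℤ} {e : E} (he : e ∈ Bsp K σ a b m n d) :
    InB K σ a b (mon m n d e) := by
  intro m' n' d'
  rw [mon, AddMonoidAlgebra.coeff_single, Finsupp.single_apply]
  split_ifs with h
  · simp only [Prod.mk.injEq] at h
    obtain ⟨rfl, rfl, rfl⟩ := h
    exact he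
  · exact Submodule.zero_mem _

/-- `y_b` is regular modulo `x_0`. -/
lemma reg_yb (σ : Eˣ) {a b : ℕ} (f g : LR E) (hf : InB K σ a b f) (hg : InB K σ a b g)
    (h : mon 0 1 b ((σ ^ (b : ℤ) : Eˣ) : E) * f = mon 1 0 0 1 * g) :
    ∃ k, InB K σ a b k ∧ f = mon 1 0 0 1 * k := by
  refine ⟨mon (-1) 0 0 1 * f, ?_, ?_⟩
  · intro m n d
    rw [mon_coeff]
    have h1 := congrArg (fun z => AddMonoidAlgebra.coeff z (m + 1, n + 1, d + b)) h
    simp only [mon_coeff] at h1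
    rw [one_mul] at h1 ⊢
    have h2 := hg (m + 1 - 1) (n + 1 - 0) (d + b - 0)
    rw [← h1] at h2
    simp only [sub_zero, add_sub_cancel_right, sub_neg_eq_add] at h2 ⊢
    have h3 := hf (m + 1) n d
    have e1 : (m + 1) * (a : ℤ) = m * a + a := by ring
    have e2 : (n + 1) * (b : ℤ) = n * b + b := by ring
    have h4 := Wsp_unshift (K := K) σ b (p := max (-b) (d - m * a)) (q := min (n * b) d)
      (Wsp_mono (K := K) σ (by omega) (by omega) h2)
    rw [Bsp] at h3 ⊢
    rcases le_total 0 (d - m * a) with h5 | h5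
    · exact Wsp_mono σ (by omega) (by omega) h4
    · exact Wsp_mono σ (by omega) (by omega) h3
  · rw [← mul_assoc, mon_mul]
    simp [mon, ← AddMonoidAlgebra.one_def, ← Prod.zero_eq_mk]

/-- `x_a - y_0` is regular modulo `x_0`. -/
lemma reg_xa (σ : Eˣ) {a b : ℕ} (ha : 0 < a) (hb : 0 < b) (f g : LR E)
    (hf : InB K σ a b f) (hg : InB K σ a b g)
    (h : (mon 1 0 a 1 - mon 0 1 0 1) * f = mon 1 0 0 1 * g) :
    ∃ k, InB K σ a b k ∧ f = mon 1 0 0 1 * k := by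
  have key := key_ind (K := K) (a := a) (b := b) σ (fun D => max 0 (D + a))
    (fun m n d => f.coeff (m, n, d))
    (fun m n d hm => Bsp_negx σ ha hm (hf m n d)) (fun m n d hn => Bsp_negy σ hb hn (hf m n d))
    (by
      intro m n d
      have h1 := congrArg (fun z => AddMonoidAlgebra.coeff z (m, n, d)) h
      simp only [sub_mul, AddMonoidAlgebra.coeff_sub, Finsupp.sub_apply, mon_coeff, one_mul,
        sub_zero] at h1
      have h2 := hg (m - 1) n d
      rw [← h1] at h2
      have e1 : (m - 1) * (a : ℤ) = m * a - a := by ring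
      exact Wsp_mono σ (by omega) (by omega) h2)
  refine ⟨mon (-1) 0 0 1 * f, ?_, ?_⟩
  · intro m n d
    rw [mon_coeff, one_mul]
    simp only [sub_zero, sub_neg_eq_add]
    have e1 : (m + 1) * (a : ℤ) = m * a + a := by ring
    exact Wsp_mono σ (by omega) (by omega) (key (m + 1) n d)
  · rw [← mul_assoc, mon_mul]
    simp [mon, ← AddMonoidAlgebra.one_def, ← Prod.zero_eq_mk]

/-- `x_a - y_0` is regular modulo `x_0, y_b`. -/
lemma reg_xa' (σ : Eˣ) {a b : ℕ} (ha : 0 < a) (hb : 0 < b) (f g k : LR E)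
    (hf : InB K σ a b f) (hg : InB K σ a b g) (hk : InB K σ a b k)
    (h : (mon 1 0 a 1 - mon 0 1 0 1) * f =
      mon 1 0 0 1 * g + mon 0 1 b ((σ ^ (b : ℤ) : Eˣ) : E) * k)
    (T : AddSubgroup (LR E)) (hTx : ∀ r, InB K σ a b r → mon 1 0 0 1 * r ∈ T)
    (hTy : ∀ r, InB K σ a b r → mon 0 1 b ((σ ^ (b : ℤ) : Eˣ) : E) * r ∈ T) :
    f ∈ T := by
  have key := key_ind (K := K) (a := a) (b := b) σ (fun D => min (max 0 (D + a)) (max b D))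
    (fun m n d => f.coeff (m, n, d))
    (fun m n d hm => Bsp_negx σ ha hm (hf m n d)) (fun m n d hn => Bsp_negy σ hb hn (hf m n d))
    (by
      intro m n d
      have h1 := congrArg (fun z => AddMonoidAlgebra.coeff z (m, n, d)) h
      simp only [sub_mul, AddMonoidAlgebra.coeff_sub, AddMonoidAlgebra.coeff_add,
        Finsupp.sub_apply, Finsupp.add_apply, mon_coeff, one_mul, sub_zero] at h1
      have h2 := hg (m - 1) n d
      have h3 := Wsp_shift (K := K) σ b (hk m (n - 1) (d - b))
      have e1 : (m - 1) * (a : ℤ) = m * a - a := by ring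
      have e2 : (n - 1) * (b : ℤ) = n * b - b := by ring
      rw [h1]
      exact Submodule.add_mem _ (Wsp_mono σ (by omega) (by omega) h2)
        (Wsp_mono σ (by omega) (by omega) h3))
  apply LR_mem
  intro m n d
  have h1 := key m n d
  have e1 : (m - 1) * (a : ℤ) = m * a - a := by ring
  have e2 : (n - 1) * (b : ℤ) = n * b - b := by ring
  rcases le_total (max 0 (d - m * a + a)) (max (b : ℤ) (d - m * a)) with h2 | h2
  · have h3 : f.coeff (m, n, d) ∈ Bsp K σ a b (m - 1) n d :=
      Wsp_mono σ (by omega) (by omega) h1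
    have h4 := hTx _ (InB_mon σ h3)
    rw [mon_mul] at h4
    simpa using h4
  · have h3 : ((σ ^ (-b : ℤ) : Eˣ) : E) * f.coeff (m, n, d) ∈ Bsp K σ a b m (n - 1) (d - b) :=
      Wsp_mono σ (by omega) (by omega) (Wsp_shift σ (-b : ℤ) h1)
    have h4 := hTy _ (InB_mon σ h3)
    rw [mon_mul, ← mul_assoc, ← Units.val_mul, ← zpow_add] at h4
    simpa using h4

end Core

section Regular

variable {K : Type*} [Field K] {E : Type*} [CommRing E] [Algebra K E]

lemma core_regular [Nontrivial E] (σ : Eˣ) {a b : ℕ} (ha : 0 < a) (hb : 0 < b)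
    {S : Type*} [CommRing S] (φ : S →+* LR E) (hinj : ∀ s, φ s = 0 → s = 0)
    (hr1 : ∀ s, InB K σ a b (φ s)) (hr2 : ∀ f, InB K σ a b f → ∃ s, φ s = f)
    (X0 Z YB : S) (h0 : φ X0 = mon 1 0 0 1) (hZ : φ Z = mon 1 0 a 1 - mon 0 1 0 1)
    (hY : φ YB = mon 0 1 b ((σ ^ (b : ℤ) : Eˣ) : E)) :
    RingTheory.Sequence.IsRegular S [X0, Z, YB] := by
  have hinj' : ∀ s t, φ s = φ t → s = t := fun s t h =>
    sub_eq_zero.1 (hinj _ (by rw [map_sub, h, sub_self]))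
  -- the four divisibility facts in `S`
  have r0 : ∀ s, X0 * s = 0 → s = 0 := by
    intro s hs
    apply hinj
    have h1 := congrArg φ hs
    rw [map_mul, h0, map_zero] at h1
    have h2 : (mon (-1) 0 0 1 : LR E) * (mon 1 0 0 1 * φ s) = φ s := by
      rw [← mul_assoc, mon_mul]
      simp [mon, ← AddMonoidAlgebra.one_def, ← Prod.zero_eq_mk]
    rw [← h2, h1, mul_zero]
  have r1 : ∀ s g, Z * s = X0 * g → ∃ k, s = X0 * k := by
    intro s g h
    have h1 := congrArg φ h
    rw [map_mul, map_mul, h0, hZ] at h1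
    obtain ⟨k, hk, hk'⟩ := reg_xa σ ha hb _ _ (hr1 s) (hr1 g) h1
    obtain ⟨k, rfl⟩ := hr2 k hk
    exact ⟨k, hinj' _ _ (by rw [hk', map_mul, h0])⟩
  have r2 : ∀ s g, YB * s = X0 * g → ∃ k, s = X0 * k := by
    intro s g h
    have h1 := congrArg φ h
    rw [map_mul, map_mul, h0, hY] at h1
    obtain ⟨k, hk, hk'⟩ := reg_yb σ _ _ (hr1 s) (hr1 g) h1
    obtain ⟨k, rfl⟩ := hr2 k hk
    exact ⟨k, hinj' _ _ (by rw [hk', map_mul, h0])⟩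
  have r3 : ∀ s g k, Z * s = X0 * g + YB * k → ∃ u v, s = X0 * u + YB * v := by
    intro s g k h
    have h1 := congrArg φ h
    rw [map_mul, map_add, map_mul, map_mul, h0, hY, hZ] at h1
    have h2 := reg_xa' σ ha hb _ _ _ (hr1 s) (hr1 g) (hr1 k) h1
      ((Ideal.span {X0, YB}).toAddSubgroup.map φ.toAddMonoidHom)
      (by
        intro r hr
        obtain ⟨r, rfl⟩ := hr2 r hr
        refine ⟨X0 * r, ?_, ?_⟩
        · exact Ideal.mul_mem_right _ _ (Ideal.subset_span (by simp))
        · simp [h0])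
      (by
        intro r hr
        obtain ⟨r, rfl⟩ := hr2 r hr
        refine ⟨YB * r, ?_, ?_⟩
        · exact Ideal.mul_mem_right _ _ (Ideal.subset_span (by simp))
        · simp [hY])
    obtain ⟨s', hs', hs''⟩ := h2
    have h3 : s' = s := hinj' _ _ hs''
    subst h3
    obtain ⟨u, v, huv⟩ := Ideal.mem_span_pair.1 hs'
    exact ⟨u, v, by rw [← huv]; ring⟩
  have r4 : ∀ s g k, YB * s = X0 * g + Z * k → ∃ u v, s = X0 * u + Z * v := by
    intro s g k h
    obtain ⟨u, v, rfl⟩ := r3 k (-g) s (by rw [h]; ring)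
    obtain ⟨w, hw⟩ := r2 (s - Z * v) (g + Z * u) (by rw [mul_sub, h]; ring)
    exact ⟨w, v, by rw [← hw]; ring⟩
  have r5 : ∀ g k l, X0 * g + Z * k + YB * l ≠ 1 := by
    intro g k l h
    have h1 := congrArg (fun s => (φ s).coeff (0, 0, 0)) h
    simp only [map_add, map_mul, h0, hZ, hY, sub_mul, AddMonoidAlgebra.coeff_add,
      AddMonoidAlgebra.coeff_sub, Finsupp.add_apply, Finsupp.sub_apply, mon_coeff, map_one] at h1
    rw [Bsp_negx σ ha (by omega) (hr1 g (0 - 1) (0 - 0) (0 - 0)),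
      Bsp_negx σ ha (by omega) (hr1 k (0 - 1) (0 - 0) (0 - a)),
      Bsp_negy σ hb (by omega) (hr1 k (0 - 0) (0 - 1) (0 - 0)),
      Bsp_negy σ hb (by omega) (hr1 l (0 - 0) (0 - 1) (0 - b))] at h1
    rw [AddMonoidAlgebra.one_def, AddMonoidAlgebra.coeff_single] at h1
    simp [Finsupp.single_apply] at h1
    exact h1 rfl
  refine ⟨⟨?_⟩, ?_⟩
  · intro i hi
    rw [isSMulRegular_quotient_iff_mem_of_smul_mem]
    intro s hs
    simp only [smul_eq_mul, Ideal.mul_top] at hs ⊢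
    simp only [List.length_cons, List.length_nil] at hi
    interval_cases i
    · simp only [List.take_zero, Ideal.ofList_nil, Ideal.mem_bot, List.getElem_cons_zero] at hs ⊢
      exact r0 s hs
    · simp only [List.take_succ_cons, List.take_zero, Ideal.ofList_singleton,
        Ideal.mem_span_singleton, List.getElem_cons_succ, List.getElem_cons_zero] at hs ⊢
      obtain ⟨g, hg⟩ := hs
      exact r1 s g hg
    · simp only [List.take_succ_cons, List.take_zero, Ideal.ofList_cons, Ideal.ofList_nil, sup_bot_eq,
        ← Ideal.span_insert, Ideal.mem_span_pair, List.getElem_cons_succ,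
        List.getElem_cons_zero] at hs ⊢
      obtain ⟨g, k, hg⟩ := hs
      obtain ⟨u, v, h⟩ := r4 s g k (by rw [← hg]; ring)
      exact ⟨u, v, by rw [h]; ring⟩
  · intro h
    simp only [smul_eq_mul, Ideal.mul_top] at h
    have h1 : (1 : S) ∈ Ideal.ofList [X0, Z, YB] := by rw [← h]; trivial
    simp only [Ideal.ofList_cons, Ideal.ofList_nil, sup_bot_eq, ← Ideal.span_insert] at h1
    rw [Ideal.mem_span_insert] at h1
    obtain ⟨g, z, hz, h1⟩ := h1
    obtain ⟨k, l, rfl⟩ := Ideal.mem_span_pair.1 hz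
    exact r5 g k l (by rw [h1]; ring)

end Regular

section Monomials

/-- The product of `m` of the variables of total weight `k`. -/
def Xc {S : Type*} [CommRing S] (x : ℕ → S) (a : ℕ) : ℕ → ℕ → S
  | 0, _ => 1
  | m + 1, k => x (min k a) * Xc x a m (k - min k a)

variable {S : Type*} [CommRing S]

lemma x_exch (x : ℕ → S) (a : ℕ)
    (hx : ∀ i j, i < a → j < a → x i * x (j + 1) = x j * x (i + 1)) (r : ℕ) :
    ∀ i j, i + r ≤ a → r ≤ j → j ≤ a → x i * x j = x (i + r) * x (j - r) := by
  induction r with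
  | zero => intro i j _ _ _; simp
  | succ r ih =>
    intro i j h1 h2 h3
    rw [ih i j (by omega) (by omega) h3]
    have := hx (i + r) (j - r - 1) (by omega) (by omega)
    rw [show j - r - 1 + 1 = j - r by omega] at this
    rw [this, mul_comm]
    congr 1

lemma Xc_mul (x : ℕ → S) (a : ℕ)
    (hx : ∀ i j, i < a → j < a → x i * x (j + 1) = x j * x (i + 1)) (m : ℕ) :
    ∀ k i, k ≤ m * a → i ≤ a → x i * Xc x a m k = Xc x a (m + 1) (k + i) := by
  induction m with
  | zero =>
    intro k i hk hi
    have : k = 0 := by simpa using hk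
    subst this
    simp [Xc, min_eq_left hi]
  | succ m ih =>
    intro k i hk hi
    have e : (m + 1) * a = m * a + a := by ring
    rw [Xc, Xc]
    rcases le_or_gt (k + i) a with h | h
    · rw [min_eq_left h, min_eq_left (show k ≤ a by omega), Nat.sub_self, Nat.sub_self,
        ← mul_assoc, x_exch x a hx k i k (by omega) le_rfl (by omega), Nat.sub_self, mul_assoc,
        ih 0 0 (by omega) (by omega), add_comm i k]
    · rw [min_eq_right h.le]
      rcases le_or_gt a k with h' | h'
      · rw [min_eq_right h', mul_left_comm, ih (k - a) i (by omega) hi]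
        congr 2
        omega
      · rw [min_eq_left h'.le, Nat.sub_self, ← mul_assoc,
          x_exch x a hx (a - i) i k (by omega) (by omega) (by omega), mul_assoc,
          ih 0 _ (by omega) (by omega)]
        congr 2 <;> omega

lemma Xc_split (x : ℕ → S) (a : ℕ) (ha : 2 ≤ a)
    (hx : ∀ i j, i < a → j < a → x i * x (j + 1) = x j * x (i + 1)) (m k : ℕ)
    (hk : k + 2 ≤ m * a) : ∃ i z, i + 2 ≤ a ∧ ∀ r ≤ 2, Xc x a m (k + r) = x (i + r) * z := by
  obtain _ | m := m
  · omega
  have e : (m + 1) * a = m * a + a := by ring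
  rcases le_total k (a - 2) with h | h
  · refine ⟨k, Xc x a m 0, by omega, fun r hr => ?_⟩
    rw [Xc_mul x a hx m 0 (k + r) (by omega) (by omega), zero_add]
  · refine ⟨a - 2, Xc x a m (k - (a - 2)), by omega, fun r hr => ?_⟩
    rw [Xc_mul x a hx m _ _ (by omega) (by omega)]
    congr 1
    omega

lemma XY_rec {K : Type*} [Field K] [Algebra K S] (x y : ℕ → S) (a b : ℕ) (ha : 2 ≤ a) (hb : 2 ≤ b)
    (hx : ∀ i j, i < a → j < a → x i * x (j + 1) = x j * x (i + 1))
    (hy : ∀ i j, i < b → j < b → y i * y (j + 1) = y j * y (i + 1)) (e1 e2 : K)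
    (hq : ∀ i j, i + 2 ≤ a → j + 2 ≤ b →
      x (i + 2) * y j - e1 • (x (i + 1) * y (j + 1)) + e2 • (x i * y (j + 2)) = 0)
    (m n k l : ℕ) (hk : k + 2 ≤ m * a) (hl : l + 2 ≤ n * b) :
    Xc x a m (k + 2) * Xc y b n l - e1 • (Xc x a m (k + 1) * Xc y b n (l + 1))
      + e2 • (Xc x a m k * Xc y b n (l + 2)) = 0 := by
  obtain ⟨i, z, hi, hz⟩ := Xc_split x a ha hx m k hk
  obtain ⟨j, w, hj, hw⟩ := Xc_split y b hb hy n l hl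
  have z0 := hz 0 (by omega)
  have w0 := hw 0 (by omega)
  rw [add_zero, add_zero] at z0 w0
  rw [hz 2 le_rfl, hz 1 (by omega), z0, hw 2 le_rfl, hw 1 (by omega), w0]
  have := congrArg (fun t => t * (z * w)) (hq i j hi hj)
  simp only [zero_mul, Algebra.smul_def] at this ⊢
  rw [← this]
  ring

end Monomials

section Psi

variable {K : Type*} [Field K] {E : Type*} [CommRing E] [Algebra K E]

lemma exists_psi (σ : Eˣ) (e1 e2 : K) (he2 : e2 ≠ 0)
    (hσ : (1 : E) - e1 • (σ : E) + e2 • ((σ : E) * σ) = 0)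
    (re im : E →ₗ[K] K) (re1 : re 1 = 1) (reσ : re (σ : E) = 0) (im1 : im 1 = 0)
    (imσ : im (σ : E) = 1) {V : Type*} [AddCommGroup V] [Module K V] (lo hi : ℕ) (c : ℕ → V)
    (hc : ∀ l, lo ≤ l → l + 2 ≤ hi → c l - e1 • c (l + 1) + e2 • c (l + 2) = 0) :
    ∃ ψ : E →ₗ[K] V, ∀ l, lo ≤ l → l ≤ hi → ψ ((σ ^ (l : ℤ) : Eˣ) : E) = c l := by
  let T : E →ₗ[K] E := LinearMap.mulLeft K ((σ ^ (-(lo : ℤ)) : Eˣ) : E)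
  let ψ : E →ₗ[K] V := (re ∘ₗ T).smulRight (c lo) + (im ∘ₗ T).smulRight (c (lo + 1))
  have hT : ∀ r : ℤ, T ((σ ^ r : Eˣ) : E) = ((σ ^ (r - lo) : Eˣ) : E) := by
    intro r
    simp only [T, LinearMap.mulLeft_apply]
    rw [← Units.val_mul, ← zpow_add, neg_add_eq_sub]
  have h0 : ψ ((σ ^ (lo : ℤ) : Eˣ) : E) = c lo := by
    simp only [ψ, LinearMap.add_apply, LinearMap.smulRight_apply, LinearMap.comp_apply, hT,
      sub_self, zpow_zero, Units.val_one, re1, im1, one_smul, zero_smul, add_zero]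
  have h1 : ψ ((σ ^ ((lo + 1 : ℕ) : ℤ) : Eˣ) : E) = c (lo + 1) := by
    simp [ψ, hT, reσ, imσ]
  refine ⟨ψ, ?_⟩
  have main : ∀ r, (lo + r ≤ hi → ψ ((σ ^ ((lo + r : ℕ) : ℤ) : Eˣ) : E) = c (lo + r)) ∧
      (lo + r + 1 ≤ hi → ψ ((σ ^ ((lo + r + 1 : ℕ) : ℤ) : Eˣ) : E) = c (lo + r + 1)) := by
    intro r
    induction r with
    | zero => exact ⟨fun _ => h0, fun _ => h1⟩
    | succ r ih =>
      refine ⟨fun h => ih.2 h, fun h => ?_⟩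
      have i1 := ih.1 (by omega)
      have i2 := ih.2 (by omega)
      have h3 := hc (lo + r) (by omega) (by omega)
      have h4 : ((σ ^ ((lo + r : ℕ) : ℤ) : Eˣ) : E) - e1 • ((σ ^ ((lo + r + 1 : ℕ) : ℤ) : Eˣ) : E)
          + e2 • ((σ ^ ((lo + r + 2 : ℕ) : ℤ) : Eˣ) : E) = 0 := by
        have := congrArg (fun t => ((σ ^ ((lo + r : ℕ) : ℤ) : Eˣ) : E) * t) hσ
        simp only [mul_zero] at this
        rw [← this]
        simp only [zpow_natCast, Units.val_pow_eq_pow_val, Algebra.smul_def]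
        ring
      have h5 := congrArg ψ h4
      rw [map_add, map_sub, map_smul, map_smul, map_zero, i1, i2, ← h3, add_right_inj] at h5
      exact smul_right_injective V he2 h5
  intro l hl hl'
  obtain ⟨r, rfl⟩ := Nat.exists_eq_add_of_le hl
  exact (main r).1 hl'

end Psi
section Main

variable {K : Type*} [Field K] {E : Type*} [CommRing E] [Algebra K E]

/-- The parametrization map. -/
def phi0 (K : Type*) [Field K] {E : Type*} [CommRing E] [Algebra K E] (σ : Eˣ) (a b : ℕ) :
    KPoly K a b →ₐ[K] LR E :=
  aeval (Sum.elim (fun i : Fin (a + 1) => mon 1 0 ((i : ℕ) : ℤ) 1)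
    (fun j : Fin (b + 1) => mon 0 1 ((j : ℕ) : ℤ) ((σ ^ ((j : ℕ) : ℤ) : Eˣ) : E)))

lemma phi0_x (σ : Eˣ) (a b : ℕ) (i : Fin (a + 1)) :
    phi0 K σ a b (xv K a b i) = mon 1 0 ((i : ℕ) : ℤ) 1 := by
  simp [phi0, xv]

lemma phi0_y (σ : Eˣ) (a b : ℕ) (j : Fin (b + 1)) :
    phi0 K σ a b (yv K a b j) = mon 0 1 ((j : ℕ) : ℤ) ((σ ^ ((j : ℕ) : ℤ) : Eˣ) : E) := by
  simp [phi0, yv]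

/-- The ideal `I_e`. -/
abbrev Ie (K : Type*) [Field K] (a b : ℕ) (e1 e2 : K) : Ideal (KPoly K a b) :=
  I2MX K a b + I2MY K a b + Je K a b e1 e2

lemma phi0_ker (σ : Eˣ) (a b : ℕ) (e1 e2 : K)
    (hσ : (1 : E) - e1 • (σ : E) + e2 • ((σ : E) * σ) = 0) :
    ∀ p ∈ Ie K a b e1 e2, phi0 K σ a b p = 0 := by
  have : Ie K a b e1 e2 ≤ RingHom.ker (phi0 K σ a b) := by
    refine sup_le (sup_le ?_ ?_) ?_
    · refine Ideal.span_le.2 ?_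
      rintro f ⟨c, c', rfl⟩
      rw [SetLike.mem_coe, RingHom.mem_ker, map_sub, map_mul, map_mul]
      simp only [phi0_x, mon_mul, Fin.val_castSucc, Fin.val_succ]
      rw [sub_eq_zero]
      refine mon_congr rfl rfl ?_ rfl
      push_cast
      ring
    · refine Ideal.span_le.2 ?_
      rintro f ⟨c, c', rfl⟩
      rw [SetLike.mem_coe, RingHom.mem_ker, map_sub, map_mul, map_mul]
      simp only [phi0_y, mon_mul, Fin.val_castSucc, Fin.val_succ]
      rw [sub_eq_zero]
      refine mon_congr rfl rfl ?_ ?_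
      · push_cast
        ring
      · simp only [zpow_natCast, Units.val_pow_eq_pow_val]
        ring
    · refine Ideal.span_le.2 ?_
      rintro f ⟨i, j, hi, hj, rfl⟩
      rw [SetLike.mem_coe, RingHom.mem_ker, ← MvPolynomial.algebraMap_eq, map_add, map_sub,
        map_mul, map_mul, map_mul, map_mul, map_mul, AlgHom.commutes, AlgHom.commutes]
      simp only [phi0_x, phi0_y, mon_mul, ← Algebra.smul_def, mon, AddMonoidAlgebra.smul_single]
      have e1' : ((1 + 0, 0 + 1, ((i + 1 : ℕ) : ℤ) + ((j + 1 : ℕ) : ℤ)) : ℤ × ℤ × ℤ) =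
          (1 + 0, 0 + 1, ((i + 2 : ℕ) : ℤ) + (j : ℤ)) := by push_cast; ring_nf
      have e2' : ((1 + 0, 0 + 1, (i : ℤ) + ((j + 2 : ℕ) : ℤ)) : ℤ × ℤ × ℤ) =
          (1 + 0, 0 + 1, ((i + 2 : ℕ) : ℤ) + (j : ℤ)) := by push_cast; ring_nf
      rw [e1', e2', ← AddMonoidAlgebra.single_sub, ← AddMonoidAlgebra.single_add]
      convert! AddMonoidAlgebra.single_zero _ using 2
      have := congrArg (fun t => ((σ ^ (j : ℤ) : Eˣ) : E) * t) hσ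
      simp only [mul_zero] at this
      rw [← this]
      simp only [zpow_natCast, Units.val_pow_eq_pow_val, Algebra.smul_def]
      ring
  exact fun p hp => this hp

lemma main_regular [Nontrivial E] (σ : Eˣ) (a b : ℕ) (ha : 2 ≤ a) (hb : 2 ≤ b) (e1 e2 : K)
    (he2 : e2 ≠ 0) (hσ : (1 : E) - e1 • (σ : E) + e2 • ((σ : E) * σ) = 0)
    (re im : E →ₗ[K] K) (re1 : re 1 = 1) (reσ : re (σ : E) = 0) (im1 : im 1 = 0)
    (imσ : im (σ : E) = 1) (p1 : 0 < a + 1) (p2 : a < a + 1) (p3 : 0 < b + 1) (p4 : b < b + 1) :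
    RingTheory.Sequence.IsRegular (KPoly K a b ⧸ Ie K a b e1 e2)
      [Ideal.Quotient.mk (Ie K a b e1 e2) (xv K a b ⟨0, p1⟩),
        Ideal.Quotient.mk (Ie K a b e1 e2) (xv K a b ⟨a, p2⟩ - yv K a b ⟨0, p3⟩),
        Ideal.Quotient.mk (Ie K a b e1 e2) (yv K a b ⟨b, p4⟩)] := by
  set I := Ie K a b e1 e2 with hI
  let φ : KPoly K a b ⧸ I →ₐ[K] LR E := Ideal.Quotient.liftₐ I (phi0 K σ a b)
    (phi0_ker σ a b e1 e2 hσ)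
  have hφ : ∀ p, φ (Ideal.Quotient.mk I p) = phi0 K σ a b p := fun p => rfl
  -- the variables in the quotient, indexed by naturals
  let x : ℕ → KPoly K a b ⧸ I := fun i =>
    if h : i < a + 1 then Ideal.Quotient.mk I (xv K a b ⟨i, h⟩) else 0
  let y : ℕ → KPoly K a b ⧸ I := fun i =>
    if h : i < b + 1 then Ideal.Quotient.mk I (yv K a b ⟨i, h⟩) else 0
  have xdef : ∀ i (h : i < a + 1), x i = Ideal.Quotient.mk I (xv K a b ⟨i, h⟩) :=
    fun i h => dif_pos h
  have ydef : ∀ i (h : i < b + 1), y i = Ideal.Quotient.mk I (yv K a b ⟨i, h⟩) :=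
    fun i h => dif_pos h
  have hx : ∀ i j, i < a → j < a → x i * x (j + 1) = x j * x (i + 1) := by
    intro i j hi hj
    rw [xdef i (by omega), xdef j (by omega), xdef (i + 1) (by omega), xdef (j + 1) (by omega),
      ← map_mul, ← map_mul, Ideal.Quotient.eq]
    exact Ideal.mem_sup_left (Ideal.mem_sup_left (Ideal.subset_span ⟨⟨i, hi⟩, ⟨j, hj⟩, rfl⟩))
  have hy : ∀ i j, i < b → j < b → y i * y (j + 1) = y j * y (i + 1) := by
    intro i j hi hj
    rw [ydef i (by omega), ydef j (by omega), ydef (i + 1) (by omega), ydef (j + 1) (by omega),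
      ← map_mul, ← map_mul, Ideal.Quotient.eq]
    exact Ideal.mem_sup_left (Ideal.mem_sup_right (Ideal.subset_span ⟨⟨i, hi⟩, ⟨j, hj⟩, rfl⟩))
  have hsm : ∀ (c : K) (p : KPoly K a b),
      c • Ideal.Quotient.mk I p = Ideal.Quotient.mk I (C c * p) := by
    intro c p
    rw [← MvPolynomial.smul_eq_C_mul]
    rfl
  have hq : ∀ i j, i + 2 ≤ a → j + 2 ≤ b →
      x (i + 2) * y j - e1 • (x (i + 1) * y (j + 1)) + e2 • (x i * y (j + 2)) = 0 := by
    intro i j hi hj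
    rw [xdef i (by omega), xdef (i + 1) (by omega), xdef (i + 2) (by omega), ydef j (by omega),
      ydef (j + 1) (by omega), ydef (j + 2) (by omega), ← map_mul, ← map_mul, ← map_mul, hsm, hsm,
      ← map_sub, ← map_add, Ideal.Quotient.eq_zero_iff_mem]
    exact Ideal.mem_sup_right (Ideal.subset_span ⟨i, j, hi, hj, rfl⟩)
  have φx : ∀ i ≤ a, φ (x i) = mon 1 0 (i : ℤ) 1 := by
    intro i hi
    rw [xdef i (by omega), hφ, phi0_x]
  have φy : ∀ i ≤ b, φ (y i) = mon 0 1 (i : ℤ) ((σ ^ (i : ℤ) : Eˣ) : E) := by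
    intro i hi
    rw [ydef i (by omega), hφ, phi0_y]
  have φX : ∀ m k, k ≤ m * a → φ (Xc x a m k) = mon (m : ℤ) 0 (k : ℤ) 1 := by
    intro m
    induction m with
    | zero =>
      intro k hk
      have : k = 0 := by simpa using hk
      subst this
      rw [Xc, map_one]
      rfl
    | succ m ih =>
      intro k hk
      have e : (m + 1) * a = m * a + a := by ring
      rw [Xc, map_mul, φx _ (min_le_right _ _), ih _ (by omega), mon_mul]
      exact mon_congr (by push_cast; ring) (by ring) (by omega) (one_mul _)
  have φY : ∀ m k, k ≤ m * b → φ (Xc y b m k) = mon 0 (m : ℤ) (k : ℤ) ((σ ^ (k : ℤ) : Eˣ) : E) := by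
    intro m
    induction m with
    | zero =>
      intro k hk
      have : k = 0 := by simpa using hk
      subst this
      rw [Xc, map_one]
      simp [AddMonoidAlgebra.one_def]
      rfl
    | succ m ih =>
      intro k hk
      have e : (m + 1) * b = m * b + b := by ring
      rw [Xc, map_mul, φy _ (min_le_right _ _), ih _ (by omega), mon_mul]
      refine mon_congr (by ring) (by push_cast; ring) (by omega) ?_
      rw [← Units.val_mul, ← zpow_add]
      congr 2
      omega
  -- every monomial has a normal form
  have hmon : ∀ s c, ∃ m n k l : ℕ, k ≤ m * a ∧ l ≤ n * b ∧
      Ideal.Quotient.mk I (monomial s c) = c • (Xc x a m k * Xc y b n l) := by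
    intro s c
    have := MvPolynomial.induction_on_monomial (σ := Fin (a + 1) ⊕ Fin (b + 1)) (R := K)
      (motive := fun p => ∃ (c : K) (m n k l : ℕ), (∃ s, p = monomial s c) ∧ k ≤ m * a ∧
        l ≤ n * b ∧ Ideal.Quotient.mk I p = c • (Xc x a m k * Xc y b n l)) ?_ ?_ s c
    · obtain ⟨c', m, n, k, l, ⟨s', hs⟩, hk, hl, h⟩ := this
      by_cases hc : c = 0
      · subst hc
        exact ⟨0, 0, 0, 0, by simp, by simp, by simp⟩
      · have : c = c' := by
          rcases (Finsupp.single_eq_single_iff _ _ _ _).1 (congrArg AddMonoidAlgebra.coeff hs)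
            with h | h
          · exact h.2
          · exact absurd h.1 hc
        subst this
        exact ⟨m, n, k, l, hk, hl, h⟩
    · intro c
      refine ⟨c, 0, 0, 0, 0, ⟨0, rfl⟩, by simp, by simp, ?_⟩
      rw [Xc, Xc, mul_one, ← map_one (Ideal.Quotient.mk I), hsm, mul_one]
    · rintro p v ⟨c, m, n, k, l, ⟨s, hs⟩, hk, hl, h⟩
      have hs' : ∃ s', p * X v = monomial s' c :=
        ⟨s + Finsupp.single v 1, by rw [hs, X, monomial_mul, mul_one]⟩
      rcases v with i | j
      · refine ⟨c, m + 1, n, k + i, l, hs', ?_, hl, ?_⟩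
        · have := i.2
          have e : (m + 1) * a = m * a + a := by ring
          omega
        · have h1 : Ideal.Quotient.mk I (X (Sum.inl i)) = x i := by
            rw [xdef i i.2]; rfl
          rw [map_mul, h, h1, ← Xc_mul x a hx m k i hk (by omega), smul_mul_assoc]
          congr 1
          ring
      · refine ⟨c, m, n + 1, k, l + j, hs', hk, ?_, ?_⟩
        · have := j.2
          have e : (n + 1) * b = n * b + b := by ring
          omega
        · have h1 : Ideal.Quotient.mk I (X (Sum.inr j)) = y j := by
            rw [ydef j j.2]; rfl
          rw [map_mul, h, h1, ← Xc_mul y b hy n l j hl (by omega), smul_mul_assoc]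
          congr 1
          ring
  have φXY : ∀ m n k l : ℕ, k ≤ m * a → l ≤ n * b → φ (Xc x a m k * Xc y b n l) =
      mon (m : ℤ) (n : ℤ) ((k : ℤ) + l) ((σ ^ (l : ℤ) : Eˣ) : E) := by
    intro m n k l hk hl
    rw [map_mul, φX m k hk, φY n l hl, mon_mul, add_zero, zero_add, one_mul]
  -- the inverse maps
  have hψ : ∀ p : ℤ × ℤ × ℤ, ∃ ψ : E →ₗ[K] (KPoly K a b ⧸ I), ∀ k l : ℕ,
      k ≤ p.1.toNat * a → l ≤ p.2.1.toNat * b → (k : ℤ) + l = p.2.2 →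
      ψ ((σ ^ (l : ℤ) : Eˣ) : E) = Xc x a p.1.toNat k * Xc y b p.2.1.toNat l := by
    rintro ⟨m, n, d⟩
    obtain ⟨ψ, h⟩ := exists_psi σ e1 e2 he2 hσ re im re1 reσ im1 imσ (d.toNat - m.toNat * a)
      (min (n.toNat * b) d.toNat)
      (fun l => Xc x a m.toNat (d.toNat - l) * Xc y b n.toNat l) (by
        intro l h1 h2
        have := XY_rec x y a b ha hb hx hy e1 e2 hq m.toNat n.toNat (d.toNat - (l + 2)) l
          (by omega) (by omega)
        rwa [show d.toNat - (l + 2) + 2 = d.toNat - l by omega,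
          show d.toNat - (l + 2) + 1 = d.toNat - (l + 1) by omega] at this)
    refine ⟨ψ, fun k l hk hl hd => ?_⟩
    simp only at hk hl hd ⊢
    rw [h l (by omega) (by omega)]
    congr 2
    omega
  choose ψ hψ using hψ
  let Ψ : (ℤ × ℤ × ℤ →₀ E) →ₗ[K] (KPoly K a b ⧸ I) := Finsupp.lsum K ψ
  have hΨ : ∀ s, Ψ (φ s).coeff = s := by
    intro s
    obtain ⟨p, rfl⟩ := Ideal.Quotient.mk_surjective s
    induction p using MvPolynomial.induction_on' with
    | monomial s c =>
      obtain ⟨m, n, k, l, hk, hl, h⟩ := hmon s c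
      rw [h, map_smul, φXY m n k l hk hl, AddMonoidAlgebra.coeff_smul, map_smul]
      congr 1
      rw [AddMonoidAlgebra.coeff_single]
      simp only [Ψ, Finsupp.lsum_single]
      have := hψ ((m : ℤ), (n : ℤ), (k : ℤ) + l) k l (by simpa using hk) (by simpa using hl) rfl
      simpa using this
    | add p q hp hq =>
      rw [map_add, map_add, AddMonoidAlgebra.coeff_add, map_add, hp, hq]
  have hr1 : ∀ s, InB K σ a b (φ s) := by
    intro s
    obtain ⟨p, rfl⟩ := Ideal.Quotient.mk_surjective s
    induction p using MvPolynomial.induction_on' with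
    | monomial s c =>
      obtain ⟨m, n, k, l, hk, hl, h⟩ := hmon s c
      rw [h, map_smul, φXY m n k l hk hl, AddMonoidAlgebra.smul_single]
      apply InB_mon
      apply Submodule.smul_mem
      apply Submodule.subset_span
      have hk' : (k : ℤ) ≤ m * a := by exact_mod_cast hk
      have hl' : (l : ℤ) ≤ n * b := by exact_mod_cast hl
      exact ⟨l, by omega, by omega, rfl⟩
    | add p q hp hq =>
      intro m n d
      rw [map_add, map_add, AddMonoidAlgebra.coeff_add, Finsupp.add_apply]
      exact Submodule.add_mem _ (hp m n d) (hq m n d)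
  have hr2 : ∀ f, InB K σ a b f → ∃ s, φ s = f := by
    intro f hf
    suffices f ∈ (φ : KPoly K a b ⧸ I →+* LR E).toAddMonoidHom.range from this
    apply LR_mem
    intro m n d
    have h1 := hf m n d
    rw [Bsp, Wsp] at h1
    have : ∀ e ∈ Submodule.span K {e : E | ∃ l : ℤ, max 0 (d - m * a) ≤ l ∧ l ≤ min (n * b) d ∧
        e = ((σ ^ l : Eˣ) : E)}, ∃ s, φ s = mon m n d e := by
      intro e he
      induction he using Submodule.span_induction with
      | mem e he =>
        obtain ⟨l, h1, h2, rfl⟩ := he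
        have hm : 0 ≤ m := by
          by_contra hm
          have : m * a < 0 := mul_neg_of_neg_of_pos (by omega) (by omega)
          omega
        have hn : 0 ≤ n := by
          by_contra hn
          have : n * b < 0 := mul_neg_of_neg_of_pos (by omega) (by omega)
          omega
        obtain ⟨l, rfl⟩ := Int.eq_ofNat_of_zero_le (show 0 ≤ l by omega)
        obtain ⟨m, rfl⟩ := Int.eq_ofNat_of_zero_le hm
        obtain ⟨n, rfl⟩ := Int.eq_ofNat_of_zero_le hn
        obtain ⟨k, hk⟩ := Int.eq_ofNat_of_zero_le (show 0 ≤ d - l by omega)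
        refine ⟨Xc x a m k * Xc y b n l, ?_⟩
        rw [φXY m n k l (by zify; omega) (by zify; omega), ← hk, sub_add_cancel]
      | zero => exact ⟨0, by simp [mon]⟩
      | add e e' _ _ h h' =>
        obtain ⟨s, hs⟩ := h
        obtain ⟨s', hs'⟩ := h'
        exact ⟨s + s', by rw [map_add, hs, hs', mon, mon, mon, AddMonoidAlgebra.single_add]⟩
      | smul c e _ h =>
        obtain ⟨s, hs⟩ := h
        exact ⟨c • s, by rw [map_smul, hs, mon, AddMonoidAlgebra.smul_single]⟩
    exact this _ h1
  refine core_regular (K := K) σ (a := a) (b := b) (by omega) (by omega)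
    (φ : KPoly K a b ⧸ I →+* LR E) ?_ hr1 hr2 _ _ _ ?_ ?_ ?_
  · intro s hs
    rw [← hΨ s, show φ s = 0 from hs, AddMonoidAlgebra.coeff_zero, map_zero]
  · exact phi0_x σ a b _
  · refine (hφ _).trans ?_
    rw [map_sub, phi0_x, phi0_y]
    simp
  · exact phi0_y σ a b _

end Main


section Quad

open QuadraticAlgebra

/-- The generator of the quadratic algebra, as a unit. -/
def quadUnit {K : Type*} [Field K] (e1 e2 α β : K) (hα : e2 * α = -1) (hβ : e2 * β = e1) :
    (QuadraticAlgebra K α β)ˣ where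
  val := ⟨0, 1⟩
  inv := ⟨e1, -e2⟩
  val_inv := by
    ext
    · simp only [re_mul, re_one]; linear_combination -hα
    · simp only [im_mul, im_one]; linear_combination -hβ
  inv_val := by
    ext
    · simp only [re_mul, re_one]; linear_combination -hα
    · simp only [im_mul, im_one]; linear_combination -hβ

lemma quadUnit_rel {K : Type*} [Field K] (e1 e2 α β : K) (hα : e2 * α = -1) (hβ : e2 * β = e1) :
    (1 : QuadraticAlgebra K α β) - e1 • (quadUnit e1 e2 α β hα hβ : QuadraticAlgebra K α β)
      + e2 • ((quadUnit e1 e2 α β hα hβ : QuadraticAlgebra K α β) *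
        (quadUnit e1 e2 α β hα hβ : QuadraticAlgebra K α β)) = 0 := by
  ext
  · simp only [quadUnit, re_add, re_sub, re_smul, re_mul, re_one, re_zero, smul_eq_mul]
    linear_combination hα
  · simp only [quadUnit, im_add, im_sub, im_smul, im_mul, im_one, im_zero, smul_eq_mul]
    linear_combination hβ

end Quad

/-- Let `F` be a field, `a ≥ b ≥ 2`, and `t₁, t₂ ∈ F` nonzero
with `e₁ = t₁ + t₂`, `e₂ = t₁t₂`. Then the images of `x₀, x_a − y₀, y_b` form
a regular sequence on the quotient ring `P/I_e`. -/
theorem stmt9 (F : Type*) [Field F] (a b : ℕ) (hab : b ≤ a) (hb : 2 ≤ b)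
    (t1 t2 : F) (ht1 : t1 ≠ 0) (ht2 : t2 ≠ 0) :
    RingTheory.Sequence.IsRegular
      (KPoly F a b ⧸ (I2MX F a b + I2MY F a b + Je F a b (t1 + t2) (t1 * t2)))
      [Ideal.Quotient.mk (I2MX F a b + I2MY F a b + Je F a b (t1 + t2) (t1 * t2))
          (xv F a b ⟨0, by omega⟩),
        Ideal.Quotient.mk (I2MX F a b + I2MY F a b + Je F a b (t1 + t2) (t1 * t2))
          (xv F a b ⟨a, by omega⟩ - yv F a b ⟨0, by omega⟩),
        Ideal.Quotient.mk (I2MX F a b + I2MY F a b + Je F a b (t1 + t2) (t1 * t2))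
          (yv F a b ⟨b, by omega⟩)] := by
  have he2 : t1 * t2 ≠ 0 := mul_ne_zero ht1 ht2
  have hα : t1 * t2 * (-(t1 * t2)⁻¹) = -1 := by rw [mul_neg, mul_inv_cancel₀ he2]
  have hβ : t1 * t2 * ((t1 + t2) * (t1 * t2)⁻¹) = t1 + t2 := by
    rw [mul_left_comm, mul_inv_cancel₀ he2, mul_one]
  exact main_regular (quadUnit _ _ _ _ hα hβ) a b (by omega) hb (t1 + t2) (t1 * t2) he2
    (quadUnit_rel _ _ _ _ hα hβ)
    { toFun := fun z => z.re, map_add' := fun _ _ => rfl, map_smul' := fun _ _ => rfl }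
    { toFun := fun z => z.im, map_add' := fun _ _ => rfl, map_smul' := fun _ _ => rfl }
    rfl rfl rfl rfl _ _ _ _

end
end

section
/- Let F be a field, let k ≥ 1, and let t ∈ F satisfy t^k = 1. Let a, b ≥ k and let M_t be the 2×(a+b) matrix over P = F[x₀,…,x_a, y₀,…,y_b] with rows (x₀,…,x_{a−1}, y₀,…,y_{b−1}) and (x₁,…,x_a, t·y₁,…,t·y_b). Then every 2×2 minor of the 2×(a+b+2−2k) matrix m with rows (x₀,…,x_{a−k}, y₀,…,y_{b−k}) and (x_k,…,x_a, y_k,…,y_b) lies in the ideal I₂(M_t) generated by the 2×2 minors of M_t. -/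
open MvPolynomial

noncomputable section

variable (F : Type*) [CommRing F] (a b : ℕ)

/-- The first row `(x₀,…,x_{a−k}, y₀,…,y_{b−k})` of the `2×(a+b+2−2k)`
matrix `m`. -/
def srow1 (k : ℕ) : Fin (a + 1 - k) ⊕ Fin (b + 1 - k) → KPoly F a b
  | Sum.inl c => xv F a b ⟨c, by have := c.isLt; omega⟩
  | Sum.inr c => yv F a b ⟨c, by have := c.isLt; omega⟩

/-- The second row `(x_k,…,x_a, y_k,…,y_b)` of the matrix `m`. -/
def srow2 (k : ℕ) : Fin (a + 1 - k) ⊕ Fin (b + 1 - k) → KPoly F a b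
  | Sum.inl c => xv F a b ⟨c + k, by have := c.isLt; omega⟩
  | Sum.inr c => yv F a b ⟨c + k, by have := c.isLt; omega⟩

/-- Iterating the one-step exchange relation `k` times. -/
theorem exchange_iter {R : Type*} [CommRing R] (I : Ideal R) (a b : ℕ) (s : R)
    (u : Fin (a + 1) → R) (v : Fin (b + 1) → R)
    (h : ∀ (i : Fin a) (j : Fin b),
      u i.castSucc * (s * v j.succ) - u i.succ * v j.castSucc ∈ I) :
    ∀ (k i j : ℕ) (hi : i + k < a + 1) (hj : j + k < b + 1),
      u ⟨i, by omega⟩ * (s ^ k * v ⟨j + k, hj⟩) - u ⟨i + k, hi⟩ * v ⟨j, by omega⟩ ∈ I := by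
  intro k
  induction k with
  | zero => intro i j hi hj; simp
  | succ k ih =>
    intro i j hi hj
    have h1 := h ⟨i, by omega⟩ ⟨j + k, by omega⟩
    have h2 := ih (i + 1) j (by omega) (by omega)
    have e : (⟨i + 1 + k, by omega⟩ : Fin (a + 1)) = ⟨i + (k + 1), hi⟩ := by
      apply Fin.ext; simp; omega
    rw [e] at h2
    have h3 := I.add_mem (I.mul_mem_left (s ^ k) h1) h2
    simp only [Fin.castSucc_mk, Fin.succ_mk] at h3
    convert h3 using 1
    simp only [add_assoc]
    ring

/-- Let `F` be a field, `k ≥ 1`, `t ∈ F` with `t^k = 1`, and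
`a, b ≥ k`. Then every 2×2 minor of the matrix `m` with rows
`(x₀,…,x_{a−k}, y₀,…,y_{b−k})` and `(x_k,…,x_a, y_k,…,y_b)` lies in the
ideal `I₂(M_t)`. -/
theorem stmt11 (F : Type*) [Field F] (a b k : ℕ) (hk : 1 ≤ k) (t : F)
    (ht : t ^ k = 1) (hka : k ≤ a) (hkb : k ≤ b)
    (c c' : Fin (a + 1 - k) ⊕ Fin (b + 1 - k)) :
    srow1 F a b k c * srow2 F a b k c' - srow1 F a b k c' * srow2 F a b k c
      ∈ I2M F a b t := by
  have htu : t ≠ 0 := by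
    rintro rfl
    rw [zero_pow (by omega)] at ht
    exact zero_ne_one ht
  have gen : ∀ d d' : Fin a ⊕ Fin b,
      mrow1 F a b d * mrow2 F a b t d' - mrow1 F a b d' * mrow2 F a b t d ∈ I2M F a b t :=
    fun d d' => Ideal.subset_span ⟨d, d', rfl⟩
  have hC : (C t : KPoly F a b) ^ k = 1 := by rw [← C_pow, ht, C_1]
  have hCi : (C t⁻¹ : KPoly F a b) * C t = 1 := by
    rw [← C_mul, inv_mul_cancel₀ htu, C_1]
  have xx := exchange_iter (I2M F a b t) a a 1 (xv F a b) (xv F a b) (by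
    intro i j
    have := gen (Sum.inl i) (Sum.inl j)
    simp only [mrow1, mrow2] at this
    convert this using 1
    ring) k
  have yy := exchange_iter (I2M F a b t) b b 1 (yv F a b) (yv F a b) (by
    intro i j
    have := (I2M F a b t).mul_mem_left (C t⁻¹) (gen (Sum.inr i) (Sum.inr j))
    simp only [mrow1, mrow2] at this
    convert this using 1
    linear_combination (-(yv F a b i.castSucc * yv F a b j.succ)
      + yv F a b i.succ * yv F a b j.castSucc) * hCi) k
  have xy := exchange_iter (I2M F a b t) a b (C t) (xv F a b) (yv F a b) (by
    intro i j
    have := gen (Sum.inl i) (Sum.inr j)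
    simp only [mrow1, mrow2] at this
    convert this using 1
    ring) k
  simp only [one_pow, one_mul, hC] at xx yy xy
  rcases c with c | c <;> rcases c' with c' | c' <;> simp only [srow1, srow2]
  · convert xx c c' (by omega) (by omega) using 1
    ring
  · convert xy c c' (by omega) (by omega) using 1
    ring
  · convert (I2M F a b t).neg_mem (xy c' c (by omega) (by omega)) using 1
    ring
  · convert yy c c' (by omega) (by omega) using 1
    ring

end
end

section
/- Let F be a field and a, b ≥ 2 integers. Let I = I₂(MX) + I₂(MY) + J_{(0,1)} ⊆ F[x₀,…,x_a, y₀,…,y_b], where J_{(0,1)} is generated by x_{i+2}y_j + x_i y_{j+2} for 0 ≤ i ≤ a−2, 0 ≤ j ≤ b−2. Then every 2×2 minor of the 2×(a+b−2) matrix m with rows (x₀, x₁, …, x_{a−2}, y₀, y₁, …, y_{b−2}) and (x₂, x₃, …, x_a, −y₂, −y₃, …, −y_b) lies in I. -/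
open MvPolynomial

noncomputable section

variable (F : Type*) [CommRing F] (a b : ℕ)

/-- The ideal `J_{(0,1)}` generated by `x_{i+2}y_j + x_iy_{j+2}` for
`0 ≤ i ≤ a−2`, `0 ≤ j ≤ b−2`. -/
def J01 : Ideal (KPoly F a b) :=
  Ideal.span { f | ∃ i j : ℕ, ∃ _ : i + 2 ≤ a, ∃ _ : j + 2 ≤ b,
    f = xv F a b ⟨i + 2, by omega⟩ * yv F a b ⟨j, by omega⟩
      + xv F a b ⟨i, by omega⟩ * yv F a b ⟨j + 2, by omega⟩ }

/-- The first row `(x₀, x₁, …, x_{a−2}, y₀, y₁, …, y_{b−2})` of the matrix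
`m` from Theorem 4.6. -/
def trow1 : Fin (a - 1) ⊕ Fin (b - 1) → KPoly F a b
  | Sum.inl c => xv F a b ⟨c, by have := c.isLt; omega⟩
  | Sum.inr c => yv F a b ⟨c, by have := c.isLt; omega⟩

/-- The second row `(x₂, x₃, …, x_a, −y₂, −y₃, …, −y_b)` of the matrix `m`. -/
def trow2 : Fin (a - 1) ⊕ Fin (b - 1) → KPoly F a b
  | Sum.inl c => xv F a b ⟨c + 2, by have := c.isLt; omega⟩
  | Sum.inr c => - yv F a b ⟨c + 2, by have := c.isLt; omega⟩

/-- Let `F` be a field and `a, b ≥ 2`. Every 2×2 minor of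
the `2×(a+b−2)` matrix `m` with rows `(x₀,…,x_{a−2}, y₀,…,y_{b−2})` and
`(x₂,…,x_a, −y₂,…,−y_b)` lies in `I = I₂(MX) + I₂(MY) + J_{(0,1)}`. -/
theorem stmt12 (F : Type*) [Field F] (a b : ℕ) (ha : 2 ≤ a) (hb : 2 ≤ b)
    (c c' : Fin (a - 1) ⊕ Fin (b - 1)) :
    trow1 F a b c * trow2 F a b c' - trow1 F a b c' * trow2 F a b c
      ∈ I2MX F a b + I2MY F a b + J01 F a b := by
  have hX : ∀ f ∈ I2MX F a b, f ∈ I2MX F a b + I2MY F a b + J01 F a b := fun f hf =>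
    Ideal.mem_sup_left (Ideal.mem_sup_left hf)
  have hY : ∀ f ∈ I2MY F a b, f ∈ I2MX F a b + I2MY F a b + J01 F a b := fun f hf =>
    Ideal.mem_sup_left (Ideal.mem_sup_right hf)
  have hJ : ∀ f ∈ J01 F a b, f ∈ I2MX F a b + I2MY F a b + J01 F a b := fun f hf =>
    Ideal.mem_sup_right hf
  rcases c with ⟨i, hi⟩ | ⟨i, hi⟩ <;> rcases c' with ⟨j, hj⟩ | ⟨j, hj⟩ <;>
    simp only [trow1, trow2]
  · have h1 : _ ∈ I2MX F a b :=
      Ideal.subset_span ⟨⟨i, by omega⟩, ⟨j + 1, by omega⟩, rfl⟩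
    have h2 : _ ∈ I2MX F a b :=
      Ideal.subset_span ⟨⟨i + 1, by omega⟩, ⟨j, by omega⟩, rfl⟩
    have h := hX _ (Ideal.add_mem _ h1 h2)
    simp only [Fin.castSucc_mk, Fin.succ_mk] at h
    convert h using 1
    ring
  · have h : _ ∈ J01 F a b :=
      Ideal.subset_span ⟨i, j, by omega, by omega, rfl⟩
    convert hJ _ (neg_mem h) using 1
    ring
  · have h : _ ∈ J01 F a b :=
      Ideal.subset_span ⟨j, i, by omega, by omega, rfl⟩
    convert hJ _ h using 1
    ring
  · have h1 : _ ∈ I2MY F a b :=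
      Ideal.subset_span ⟨⟨i, by omega⟩, ⟨j + 1, by omega⟩, rfl⟩
    have h2 : _ ∈ I2MY F a b :=
      Ideal.subset_span ⟨⟨i + 1, by omega⟩, ⟨j, by omega⟩, rfl⟩
    have h := hY _ (neg_mem (Ideal.add_mem _ h1 h2))
    simp only [Fin.castSucc_mk, Fin.succ_mk] at h
    convert h using 1
    ring

end
end

section
/- Let a, b ≥ 2 and 1 ≤ p ≤ a+b−2 be integers. Then, as integers, p·C(a, p+1) + Σ_{j=0}^{b−2} [(a−2)·C(a+j−1, p−1) + C(a+j−2, p−1)] + Σ_{j=1}^{b−2} j·C(a+j−2, p−1) + (b−2)·C(a+b−3, p−1) + C(b−2, p−1) = C(a−2, p−1) + C(b−2, p−1) + p·C(a+b−1, p+1) − 2·C(a+b−3, p−1), where C(n, k) denotes the binomial coefficient (which is 0 when k > n or k < 0). -/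
lemma stmt14_aux (A q n : ℕ) :
    ((q : ℤ) + 1) * ((A + 2).choose (q + 2) : ℤ)
      + ∑ j ∈ Finset.range (n + 1),
          ((A : ℤ) * ((A + j + 1).choose q : ℤ) + ((A + j).choose q : ℤ))
      + ∑ j ∈ Finset.Icc 1 n, (j : ℤ) * ((A + j).choose q : ℤ)
      + (n : ℤ) * ((A + n + 1).choose q : ℤ)
    = (A.choose q : ℤ) + ((q : ℤ) + 1) * ((A + n + 3).choose (q + 2) : ℤ)
      - 2 * ((A + n + 1).choose q : ℤ) := by
  induction n with
  | zero =>
    have h1 : ((A + 2 : ℕ) : ℤ) * ((A + 1).choose q : ℤ)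
        = ((A + 2).choose (q + 1) : ℤ) * ((q + 1 : ℕ) : ℤ) := by
      exact_mod_cast Nat.add_one_mul_choose_eq (A + 1) q
    have h2 : ((A + 3).choose (q + 2) : ℤ)
        = ((A + 2).choose (q + 1) : ℤ) + ((A + 2).choose (q + 2) : ℤ) := by
      exact_mod_cast Nat.choose_succ_succ' (A + 2) (q + 1)
    simp only [zero_add, Finset.sum_range_one, add_zero]
    rw [h2]
    push_cast at h1 ⊢
    simp
    linear_combination h1
  | succ n ih =>
    have h1 : ((A + n + 3 : ℕ) : ℤ) * ((A + n + 2).choose q : ℤ)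
        = ((A + n + 3).choose (q + 1) : ℤ) * ((q + 1 : ℕ) : ℤ) := by
      exact_mod_cast Nat.add_one_mul_choose_eq (A + n + 2) q
    have h2 : ((A + n + 4).choose (q + 2) : ℤ)
        = ((A + n + 3).choose (q + 1) : ℤ) + ((A + n + 3).choose (q + 2) : ℤ) := by
      exact_mod_cast Nat.choose_succ_succ' (A + n + 3) (q + 1)
    rw [Finset.sum_range_succ, Finset.sum_Icc_succ_top (by omega)]
    rw [show A + (n + 1) + 3 = A + n + 4 by ring, show A + (n + 1) + 1 = A + n + 2 by ring,
      show A + (n + 1) = A + n + 1 by ring, h2]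
    push_cast at h1 ih ⊢
    linear_combination ih + h1

/-- For integers `a, b ≥ 2` and `1 ≤ p ≤ a+b−2`, the Betti
number formula
`p·C(a,p+1) + Σ_{j=0}^{b−2}((a−2)·C(a+j−1,p−1) + C(a+j−2,p−1))
  + Σ_{j=1}^{b−2} j·C(a+j−2,p−1) + (b−2)·C(a+b−3,p−1) + C(b−2,p−1)`
equals its simplification
`C(a−2,p−1) + C(b−2,p−1) + p·C(a+b−1,p+1) − 2·C(a+b−3,p−1)` in `ℤ`. -/
theorem stmt14 (a b p : ℕ) (ha : 2 ≤ a) (hb : 2 ≤ b)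
    (hp : 1 ≤ p) (hp' : p ≤ a + b - 2) :
    (p : ℤ) * (a.choose (p + 1) : ℤ)
      + ∑ j ∈ Finset.range (b - 1),
          (((a : ℤ) - 2) * ((a + j - 1).choose (p - 1) : ℤ)
            + ((a + j - 2).choose (p - 1) : ℤ))
      + ∑ j ∈ Finset.Icc 1 (b - 2), (j : ℤ) * ((a + j - 2).choose (p - 1) : ℤ)
      + ((b : ℤ) - 2) * ((a + b - 3).choose (p - 1) : ℤ)
      + ((b - 2).choose (p - 1) : ℤ)
    = ((a - 2).choose (p - 1) : ℤ) + ((b - 2).choose (p - 1) : ℤ)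
      + (p : ℤ) * ((a + b - 1).choose (p + 1) : ℤ)
      - 2 * ((a + b - 3).choose (p - 1) : ℤ) := by
  obtain ⟨A, rfl⟩ := Nat.exists_eq_add_of_le' ha
  obtain ⟨n, rfl⟩ := Nat.exists_eq_add_of_le' hb
  obtain ⟨q, rfl⟩ := Nat.exists_eq_add_of_le' hp
  have h := stmt14_aux A q n
  have e1 : ∀ j, A + 2 + j - 1 = A + j + 1 := fun j => by omega
  have e2 : ∀ j, A + 2 + j - 2 = A + j := fun j => by omega
  have e3 : A + 2 + (n + 2) - 3 = A + n + 1 := by omega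
  have e4 : A + 2 + (n + 2) - 1 = A + n + 3 := by omega
  have e5 : n + 2 - 1 = n + 1 := by omega
  have e6 : ((A + 2 : ℕ) : ℤ) - 2 = A := by push_cast; ring
  have e7 : ((n + 2 : ℕ) : ℤ) - 2 = n := by push_cast; ring
  rw [e3, e4, e5, e6, e7]
  simp only [e1, e2, Nat.add_sub_cancel]
  push_cast at h ⊢
  linear_combination h
end
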